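/- arXiv:1305.1503 — 2 statements merged into one kernel-verified Lean document; each statement's English description precedes it below -/
import Mathlib

section
/- Let R be a commutative ring and let I and J be finitely generated ideals of R. Then Loc(R/I) ∩ Loc(R/J) = Loc(R/(I + J)) in D(R). -/
open CategoryTheory CategoryTheory.Limits CategoryTheory.Pretriangulated ZeroObject

universe w w' v u

section TriangulatedDefs

variable {T : Type u} [Category.{v} T] [Preadditive T] [HasZeroObject T]
  [HasShift T ℤ] [∀ n : ℤ, (shiftFunctor T n).Additive] [Pretriangulated T]

/-- A localizing subcategory of a (pre)triangulated category, encoded as a set of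
objects: it is closed under isomorphisms, contains the zero object, is stable
under shifts, closed under cones of distinguished triangles (hence a full
triangulated subcategory), and closed under arbitrary small coproducts
(phrased via colimit cofans, so that no global existence of coproducts
is needed). -/
structure IsLocalizingSub (S : Set T) : Prop where
  zero_mem : (0 : T) ∈ S
  mem_of_iso : ∀ {x y : T}, (x ≅ y) → x ∈ S → y ∈ S
  shift_mem : ∀ (n : ℤ) {x : T}, x ∈ S → x⟦n⟧ ∈ S
  cone_mem : ∀ (Tr : Triangle T), Tr ∈ distinguishedTriangles →
    Tr.obj₁ ∈ S → Tr.obj₂ ∈ S → Tr.obj₃ ∈ S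
  coprod_mem : ∀ {ι : Type w} (f : ι → T) (c : Cofan f), IsColimit c →
    (∀ i, f i ∈ S) → c.pt ∈ S

/-- A colocalizing subcategory: as `IsLocalizingSub` but with products instead
of coproducts. -/
structure IsColocalizingSub (S : Set T) : Prop where
  zero_mem : (0 : T) ∈ S
  mem_of_iso : ∀ {x y : T}, (x ≅ y) → x ∈ S → y ∈ S
  shift_mem : ∀ (n : ℤ) {x : T}, x ∈ S → x⟦n⟧ ∈ S
  cone_mem : ∀ (Tr : Triangle T), Tr ∈ distinguishedTriangles →
    Tr.obj₁ ∈ S → Tr.obj₂ ∈ S → Tr.obj₃ ∈ S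
  prod_mem : ∀ {ι : Type w} (f : ι → T) (c : Fan f), IsLimit c →
    (∀ i, f i ∈ S) → c.pt ∈ S

/-- `Loc S`: the smallest localizing subcategory containing the set of
objects `S` (the intersection of all localizing subcategories containing it). -/
def Loc (S : Set T) : Set T :=
  ⋂₀ {L : Set T | IsLocalizingSub.{w} L ∧ S ⊆ L}

/-- The right orthogonal of a set of objects. -/
def rightOrth (C : Set T) : Set T :=
  {x : T | ∀ ⦃c : T⦄, c ∈ C → ∀ (g : c ⟶ x), g = 0}

end TriangulatedDefs

section CompactDefs

variable {T : Type u} [Category.{v} T] [Preadditive T]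

/-- The canonical comparison map `⨁ᵢ Hom(x, fᵢ) →+ Hom(x, ∐ f)` associated to a
cofan `c` on a family `f`. -/
noncomputable def cofanHomComparison {ι : Type w} (x : T) (f : ι → T) (c : Cofan f) :
    (Π₀ i, (x ⟶ f i)) →+ (x ⟶ c.pt) :=
  letI := Classical.decEq ι
  DFinsupp.sumAddHom (fun i => AddMonoidHom.mk' (fun φ => φ ≫ c.inj i)
    (fun φ ψ => Preadditive.add_comp _ _ _ φ ψ (c.inj i)))

/-- An object `x` is compact if `Hom(x, -)` commutes with arbitrary small
coproducts, i.e. for every colimit cofan on a family `f`, the canonical map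
`⨁ᵢ Hom(x, fᵢ) → Hom(x, ∐ f)` is bijective. -/
def IsCompactObj (x : T) : Prop :=
  ∀ ⦃ι : Type w⦄ (f : ι → T) (c : Cofan f), IsColimit c →
    Function.Bijective (cofanHomComparison x f c)

end CompactDefs

section DR

variable (R : Type u) [CommRing R] [HasDerivedCategory.{w'} (ModuleCat.{u} R)]

/-- The `R`-module `M`, regarded as an object of the derived category `D(R)`,
as a complex concentrated in degree `0`. -/
noncomputable def smod (M : ModuleCat.{u} R) : DerivedCategory (ModuleCat.{u} R) :=
  (DerivedCategory.singleFunctor (ModuleCat.{u} R) 0).obj M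

end DR

section AbstractPart

variable {T : Type u} [Category.{v} T] [Preadditive T] [HasZeroObject T]
  [HasShift T ℤ] [∀ n : ℤ, (shiftFunctor T n).Additive] [Pretriangulated T]

lemma IsLocalizingSub.ext_mem {L : Set T} (hL : IsLocalizingSub.{w} L) (Tr : Triangle T)
    (hT : Tr ∈ distinguishedTriangles) (h1 : Tr.obj₁ ∈ L) (h3 : Tr.obj₃ ∈ L) : Tr.obj₂ ∈ L :=
  hL.cone_mem Tr.invRotate (inv_rot_of_distTriang _ hT) (hL.shift_mem (-1) h3) h1

lemma IsLocalizingSub.of_shift {L : Set T} (hL : IsLocalizingSub.{w} L) (n : ℤ) {X : T}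
    (h : X⟦n⟧ ∈ L) : X ∈ L :=
  hL.mem_of_iso ((shiftEquiv T n).unitIso.symm.app X) (hL.shift_mem (-n) h)

lemma IsLocalizingSub.of_isZero {L : Set T} (hL : IsLocalizingSub.{w} L) {X : T}
    (h : IsZero X) : X ∈ L :=
  hL.mem_of_iso ((isZero_zero T).iso h) hL.zero_mem

lemma loc_isLocalizing (S : Set T) : IsLocalizingSub.{w} (Loc.{w} S) where
  zero_mem := fun _ hL => hL.1.zero_mem
  mem_of_iso e hx := fun L hL => hL.1.mem_of_iso e (hx L hL)
  shift_mem n _ hx := fun L hL => hL.1.shift_mem n (hx L hL)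
  cone_mem Tr hT h1 h2 := fun L hL => hL.1.cone_mem Tr hT (h1 L hL) (h2 L hL)
  coprod_mem f c hc h := fun L hL => hL.1.coprod_mem f c hc (fun i => h i L hL)

lemma subset_loc (S : Set T) : S ⊆ Loc.{w} S := fun _ hx _ hL => hL.2 hx

lemma loc_subset {S L : Set T} (hL : IsLocalizingSub.{w} L) (h : S ⊆ L) : Loc.{w} S ⊆ L :=
  fun _ hx => hx L ⟨hL, h⟩

section Helpers

variable {X Y Z : T} {f : X ⟶ Y} {g : Y ⟶ Z} {d : Z ⟶ X⟦(1 : ℤ)⟧}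

lemma dtz12 (h : Triangle.mk f g d ∈ distinguishedTriangles) : f ≫ g = 0 :=
  comp_distTriang_mor_zero₁₂ _ h
lemma dtz23 (h : Triangle.mk f g d ∈ distinguishedTriangles) : g ≫ d = 0 :=
  comp_distTriang_mor_zero₂₃ _ h
lemma dtz31 (h : Triangle.mk f g d ∈ distinguishedTriangles) : d ≫ f⟦(1 : ℤ)⟧' = 0 :=
  comp_distTriang_mor_zero₃₁ _ h
lemma dtrot (h : Triangle.mk f g d ∈ distinguishedTriangles) :
    Triangle.mk g d (-f⟦(1 : ℤ)⟧') ∈ distinguishedTriangles :=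
  rot_of_distTriang _ h
lemma dtco2 (h : Triangle.mk f g d ∈ distinguishedTriangles) {W : T} (x : W ⟶ Y)
    (hx : x ≫ g = 0) : ∃ y : W ⟶ X, x = y ≫ f :=
  Triangle.coyoneda_exact₂ _ h x hx
lemma dtco3 (h : Triangle.mk f g d ∈ distinguishedTriangles) {W : T} (x : W ⟶ Z)
    (hx : x ≫ d = 0) : ∃ y : W ⟶ Y, x = y ≫ g :=
  Triangle.coyoneda_exact₃ _ h x hx
lemma dtco1 (h : Triangle.mk f g d ∈ distinguishedTriangles) {W : T} (x : W ⟶ X⟦(1 : ℤ)⟧)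
    (hx : x ≫ f⟦(1 : ℤ)⟧' = 0) : ∃ y : W ⟶ Z, x = y ≫ d :=
  Triangle.coyoneda_exact₁ _ h x hx
lemma dtyo2 (h : Triangle.mk f g d ∈ distinguishedTriangles) {W : T} (x : Y ⟶ W)
    (hx : f ≫ x = 0) : ∃ y : Z ⟶ W, x = g ≫ y :=
  Triangle.yoneda_exact₂ _ h x hx
lemma dtyo3 (h : Triangle.mk f g d ∈ distinguishedTriangles) {W : T} (x : Z ⟶ W)
    (hx : g ≫ x = 0) : ∃ y : X⟦(1 : ℤ)⟧ ⟶ W, x = d ≫ y :=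
  Triangle.yoneda_exact₃ _ h x hx

end Helpers

/-- Abstract properties of the family of shifts of the unit. -/
structure GenFam [HasCoproducts.{w} T] (S : ℤ → T) : Prop where
  shift_iso : ∀ k n : ℤ, Nonempty (S k ≅ (S (k + n))⟦n⟧)
  isIso : ∀ {X Y : T} (f : X ⟶ Y),
    (∀ k, Function.Bijective (fun x : S k ⟶ X => x ≫ f)) → IsIso f
  cpt : ∀ {ι : Type w} [DecidableEq ι] (f : ι → T) (k : ℤ) (x : S k ⟶ ∐ f),
    ∃ s : Finset ι, x = ∑ i ∈ s, x ≫ Sigma.π f i ≫ Sigma.ι f i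
  small : ∀ (k : ℤ) (Y : T), Small.{w} (S k ⟶ Y)

variable [HasCoproducts.{w} T] {S : ℤ → T}

lemma GenFam.unshift (hS : GenFam.{w} S) {k n : ℤ} {Y : T} (x : S k ⟶ Y⟦n⟧) :
    ∃ (e : S k ≅ (S (k + n))⟦n⟧) (y : S (k + n) ⟶ Y), x = e.hom ≫ y⟦n⟧' := by
  obtain ⟨e⟩ := hS.shift_iso k n
  obtain ⟨y, hy⟩ := (shiftFunctor T n).map_surjective (e.inv ≫ x)
  exact ⟨e, y, by rw [hy]; simp⟩

lemma GenFam.inj_shift (hS : GenFam.{w} S) {X Y : T} (f : X ⟶ Y) (n : ℤ)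
    (h : ∀ k (x : S k ⟶ X), x ≫ f = 0 → x = 0) :
    ∀ k (x : S k ⟶ X⟦n⟧), x ≫ f⟦n⟧' = 0 → x = 0 := by
  intro k x hx
  obtain ⟨e, y, rfl⟩ := hS.unshift x
  have : (y ≫ f)⟦n⟧' = 0 := by
    rw [← cancel_epi e.hom]; simpa using hx
  have h2 : y ≫ f = 0 := (shiftFunctor T n).map_injective (by simpa using this)
  rw [h _ y h2]; simp

lemma GenFam.ghost_shift (hS : GenFam.{w} S) {X Y : T} (f : X ⟶ Y) (n : ℤ)
    (h : ∀ k (x : S k ⟶ X), x ≫ f = 0) :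
    ∀ k (x : S k ⟶ X⟦n⟧), x ≫ f⟦n⟧' = 0 := by
  intro k x
  obtain ⟨e, y, rfl⟩ := hS.unshift x
  rw [Category.assoc, ← Functor.map_comp, h]; simp

lemma GenFam.hocolim (hS : GenFam.{w} S) {L : Set T} (hL : IsLocalizingSub.{w} L) {W : T} (Z : ℕ → T)
    (m : ∀ j, Z j ⟶ Z (j + 1)) (wm : ∀ j, Z j ⟶ W) (hm : ∀ j, m j ≫ wm (j + 1) = wm j)
    (hZ : ∀ j, Z j ∈ L) (hker : ∀ j k (x : S k ⟶ Z j), x ≫ wm j = 0 → x ≫ m j = 0)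
    (hsurj : ∀ k (x : S k ⟶ W), ∃ j, ∃ y : S k ⟶ Z j, y ≫ wm j = x) : W ∈ L := by
  let F : ULift.{w} ℕ → T := fun i => Z i.down
  let s : ∐ F ⟶ ∐ F := Sigma.desc (fun i => m i.down ≫ Sigma.ι F ⟨i.down + 1⟩)
  have hs : ∀ i : ℕ, Sigma.ι F ⟨i⟩ ≫ s = m i ≫ Sigma.ι F ⟨i + 1⟩ := fun i => by
    simp [s]
  have hFL : ∐ F ∈ L := hL.coprod_mem F (Cofan.mk _ (Sigma.ι F)) (coproductIsCoproduct F)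
    (fun i => hZ i.down)
  have hπ0 : s ≫ Sigma.π F ⟨0⟩ = 0 := by
    refine Sigma.hom_ext _ _ (fun ⟨i⟩ => ?_)
    rw [← Category.assoc, hs, Category.assoc, Sigma.ι_π_of_ne _ (by simp)]
    simp
  have hπs : ∀ j, s ≫ Sigma.π F ⟨j + 1⟩ = Sigma.π F ⟨j⟩ ≫ m j := by
    intro j
    refine Sigma.hom_ext _ _ (fun ⟨i⟩ => ?_)
    rw [← Category.assoc, hs, Category.assoc]
    by_cases hij : i = j
    · subst hij
      rw [Sigma.ι_π_eq_id, ← Category.assoc, Sigma.ι_π_eq_id]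
      simp [F]
    · rw [Sigma.ι_π_of_ne _ (by simpa using hij), ← Category.assoc,
        Sigma.ι_π_of_ne _ (by simpa using hij)]
      simp
  have hinj : ∀ k (x : S k ⟶ ∐ F), x ≫ (𝟙 _ - s) = 0 → x = 0 := by
    intro k x hx
    have hx' : x = x ≫ s := by
      rw [Preadditive.comp_sub, sub_eq_zero] at hx; simpa using hx
    have h0 : ∀ j : ℕ, x ≫ Sigma.π F ⟨j⟩ = 0 := by
      intro j
      induction j with
      | zero => rw [hx', Category.assoc, hπ0]; simp
      | succ j ih => rw [hx', Category.assoc, hπs, ← Category.assoc, ih]; simp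
    obtain ⟨t, ht⟩ := hS.cpt F k x
    rw [ht]
    refine Finset.sum_eq_zero (fun ⟨i⟩ _ => ?_)
    rw [← Category.assoc, h0]; simp
  obtain ⟨H, q, d, hT⟩ := distinguished_cocone_triangle (𝟙 _ - s)
  have hHL : H ∈ L := hL.cone_mem _ hT hFL hFL
  have hsq : s ≫ q = q := by
    have := dtz12 hT
    rw [Preadditive.sub_comp, sub_eq_zero, Category.id_comp] at this
    exact this.symm
  let g : ∀ j, Z j ⟶ H := fun j => Sigma.ι F ⟨j⟩ ≫ q
  have hg : ∀ j, m j ≫ g (j + 1) = g j := fun j => by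
    simp only [g]
    rw [← Category.assoc, ← hs, Category.assoc, hsq]
  let wt : ∐ F ⟶ W := Sigma.desc (fun i => wm i.down)
  have hwt : s ≫ wt = wt := by
    refine Sigma.hom_ext _ _ (fun ⟨i⟩ => ?_)
    rw [← Category.assoc, hs]
    simp [wt, hm]
  obtain ⟨h, hh⟩ := dtyo2 hT wt (by
    rw [Preadditive.sub_comp, hwt, Category.id_comp, sub_self])
  have hgh : ∀ j, g j ≫ h = wm j := fun j => by
    simp only [g]
    rw [Category.assoc, ← hh]; simp [wt]
  -- every element of H comes from a finite stage
  have hfin : ∀ k (x : S k ⟶ H), ∃ j, ∃ y : S k ⟶ Z j, x = y ≫ g j := by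
    intro k x
    have hx0 : x ≫ d = 0 := by
      apply hS.inj_shift _ 1 hinj
      rw [Category.assoc, dtz31 hT, comp_zero]
    obtain ⟨y, hy⟩ := dtco3 hT x hx0
    obtain ⟨t, ht⟩ := hS.cpt F k y
    have hstep : ∀ (j n : ℕ) (z : S k ⟶ Z j), ∃ z' : S k ⟶ Z (j + n), z ≫ g j = z' ≫ g (j + n) := by
      intro j n z
      induction n with
      | zero => exact ⟨z, rfl⟩
      | succ n ih =>
        obtain ⟨z', hz'⟩ := ih
        exact ⟨z' ≫ m (j + n), by rw [hz', Category.assoc]; exact congrArg _ (hg (j + n)).symm⟩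
    have hstep' : ∀ (j n : ℕ), j ≤ n → ∀ (z : S k ⟶ Z j), ∃ z' : S k ⟶ Z n,
        z ≫ g j = z' ≫ g n := by
      intro j n hjn z
      obtain ⟨n, rfl⟩ := Nat.exists_eq_add_of_le hjn
      exact hstep j n z
    have key : ∀ t : Finset (ULift.{w} ℕ), ∃ j, ∃ z : S k ⟶ Z j,
        (∑ i ∈ t, y ≫ Sigma.π F i ≫ Sigma.ι F i) ≫ q = z ≫ g j := by
      intro t
      classical
      induction t using Finset.induction_on with
      | empty => exact ⟨0, 0, by simp⟩
      | insert a t ha ih =>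
        obtain ⟨j, z, hz⟩ := ih
        obtain ⟨z1, h1⟩ := hstep' j (max j a.down) (le_max_left _ _) z
        obtain ⟨z2, h2⟩ := hstep' a.down (max j a.down) (le_max_right _ _) (y ≫ Sigma.π F a)
        refine ⟨max j a.down, z2 + z1, ?_⟩
        rw [Finset.sum_insert ha, Preadditive.add_comp, hz, h1, Preadditive.add_comp, ← h2]
        simp [g]
    obtain ⟨j, z, hz⟩ := key t
    exact ⟨j, z, by rw [hy, ht, hz]⟩
  have : IsIso h := by
    refine hS.isIso h (fun k => ⟨?_, ?_⟩)
    · have h0 : ∀ x : S k ⟶ H, x ≫ h = 0 → x = 0 := by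
        intro x hx
        obtain ⟨j, y, rfl⟩ := hfin k x
        rw [Category.assoc, hgh] at hx
        rw [← hg, ← Category.assoc, hker j k y hx]; simp
      intro x y hxy
      have := h0 (x - y) (by rw [Preadditive.sub_comp]; exact sub_eq_zero.2 hxy)
      exact sub_eq_zero.1 this
    · intro x
      obtain ⟨j, y, rfl⟩ := hsurj k x
      exact ⟨y ≫ g j, by simp [hgh]⟩
  exact hL.mem_of_iso (asIso h) hHL

/-- State in the tower construction. -/
structure TowerSt (L P : Set T) (X : T) where
  Y : T
  Z : T
  q : X ⟶ Y
  p : Y ⟶ Z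
  d : Z ⟶ X⟦(1 : ℤ)⟧
  dist : Triangle.mk q p d ∈ distinguishedTriangles
  hY : Y ∈ P
  hZ : Z ∈ L

lemma GenFam.tower (hS : GenFam.{w} S) [IsTriangulated T] {L : Set T} (hL : IsLocalizingSub.{w} L) {P : Set T}
    (hP : ∀ Y ∈ P, ∃ (G Y' : T) (g : G ⟶ Y) (p : Y ⟶ Y') (d : Y' ⟶ G⟦(1 : ℤ)⟧),
      Triangle.mk g p d ∈ distinguishedTriangles ∧ G ∈ L ∧ Y' ∈ P ∧
      ∀ k (x : S k ⟶ Y), x ≫ p = 0) : P ⊆ L := by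
  intro X hX
  have step : ∀ s : TowerSt L P X, ∃ (s' : TowerSt L P X) (m : s.Z ⟶ s'.Z),
      m ≫ s'.d = s.d ∧ (∀ k (x : S k ⟶ s.Z), x ≫ s.d = 0 → x ≫ m = 0) ∧
      (∀ k (x : S k ⟶ X⟦(1 : ℤ)⟧), ∃ y, y ≫ s'.d = x) := by
    intro s
    obtain ⟨G, Y', g, p, d, hT, hG, hY', hgh⟩ := hP s.Y s.hY
    obtain ⟨Z', v, w, hT'⟩ := distinguished_cocone_triangle (s.q ≫ p)
    have o := Triangulated.someOctahedron rfl s.dist (dtrot hT) hT'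
    refine ⟨⟨Y', Z', s.q ≫ p, v, w, hT', hY',
      hL.ext_mem _ o.mem s.hZ (hL.shift_mem 1 hG)⟩, o.m₁, o.comm₂, ?_, ?_⟩
    · intro k x hx
      obtain ⟨y, hy⟩ := dtco3 s.dist x hx
      have hc : s.p ≫ o.m₁ = p ≫ v := o.comm₁
      rw [hy, Category.assoc, hc, ← Category.assoc, hgh]; simp
    · intro k x
      have := hS.ghost_shift (s.q ≫ p) 1 (fun k x => by
        rw [← Category.assoc, hgh]) k x
      obtain ⟨y, hy⟩ := dtco1 hT' x this
      exact ⟨y, hy.symm⟩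
  choose nx m h1 h2 h3 using step
  let s0 : TowerSt L P X := ⟨X, 0, 𝟙 X, 0, 0, contractible_distinguished X, hX, hL.zero_mem⟩
  let sq : ℕ → TowerSt L P X := fun n => nx^[n] s0
  have hsq : ∀ n, sq (n + 1) = nx (sq n) := fun n => Function.iterate_succ_apply' _ _ _
  have hsq' : ∀ n, ∃ m' : (sq n).Z ⟶ (sq (n + 1)).Z, m' ≫ (sq (n + 1)).d = (sq n).d ∧
      (∀ k (x : S k ⟶ (sq n).Z), x ≫ (sq n).d = 0 → x ≫ m' = 0) := by
    intro n
    rw [hsq]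
    exact ⟨m _, h1 _, h2 _⟩
  choose m' hm' hk' using hsq'
  apply hL.of_shift 1
  refine hS.hocolim hL (fun n => (sq n).Z) m' (fun n => (sq n).d) hm' (fun n => (sq n).hZ)
    hk' (fun k x => ⟨1, ?_⟩)
  obtain ⟨y, hy⟩ := h3 s0 k x
  exact ⟨y, hy⟩

end AbstractPart

section TorsPart

variable {T : Type u} [Category.{v} T] [Preadditive T] [HasZeroObject T]
  [HasShift T ℤ] [∀ n : ℤ, (shiftFunctor T n).Additive] [Pretriangulated T]
  [HasCoproducts.{w} T] {S : ℤ → T}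
  {R : Type w'} [CommRing R] [Linear R T] [∀ n : ℤ, (shiftFunctor T n).Linear R]

/-- Objects all of whose elements are `I`-power torsion. -/
def TorsSub (S : ℤ → T) (I : Ideal R) : Set T :=
  {Y | ∀ k (x : S k ⟶ Y), ∀ a ∈ I, ∃ n : ℕ, a ^ n • x = 0}

lemma pow_kill_mono {M : Type v} [AddCommGroup M] [Module R M] {a : R} {x : M} {n m : ℕ}
    (h : a ^ n • x = 0) (hnm : n ≤ m) : a ^ m • x = 0 := by
  obtain ⟨m, rfl⟩ := Nat.exists_eq_add_of_le hnm
  rw [add_comm, pow_add, mul_smul, h, smul_zero]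

lemma GenFam.tors_localizing (hS : GenFam.{w} S) (I : Ideal R) :
    IsLocalizingSub.{w} (TorsSub S I) where
  zero_mem := fun k x a _ => ⟨0, by rw [(isZero_zero T).eq_of_tgt x 0, smul_zero]⟩
  mem_of_iso := by
    intro X Y e hX k x a ha
    obtain ⟨n, hn⟩ := hX k (x ≫ e.inv) a ha
    refine ⟨n, ?_⟩
    rw [← Linear.smul_comp] at hn
    rw [← cancel_mono e.inv, hn, zero_comp]
  shift_mem := by
    intro n X hX k x a ha
    obtain ⟨e, y, rfl⟩ := hS.unshift x
    obtain ⟨m, hm⟩ := hX _ y a ha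
    refine ⟨m, ?_⟩
    rw [← Linear.comp_smul, ← Functor.map_smul, hm]; simp
  cone_mem := by
    intro Tr hT h1 h2 k x a ha
    have hX : ∀ k (x : S k ⟶ Tr.obj₁⟦(1 : ℤ)⟧), ∃ n : ℕ, a ^ n • x = 0 := by
      intro k x
      obtain ⟨e, y, rfl⟩ := hS.unshift x
      obtain ⟨m, hm⟩ := h1 _ y a ha
      refine ⟨m, ?_⟩
      rw [← Linear.comp_smul, ← Functor.map_smul, hm]; simp
    obtain ⟨n, hn⟩ := hX k (x ≫ Tr.mor₃)
    rw [← Linear.smul_comp] at hn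
    obtain ⟨y, hy⟩ := Triangle.coyoneda_exact₃ _ hT _ hn
    obtain ⟨m, hm⟩ := h2 k y a ha
    refine ⟨m + n, ?_⟩
    rw [pow_add, mul_smul, hy, ← Linear.smul_comp, hm, zero_comp]
  coprod_mem := by
    intro ι f c hc hf k x a ha
    classical
    let e : c.pt ≅ ∐ f := hc.coconePointUniqueUpToIso (coproductIsCoproduct f)
    have key : ∀ y : S k ⟶ ∐ f, ∃ n : ℕ, a ^ n • y = 0 := by
      intro y
      obtain ⟨s, hs⟩ := hS.cpt f k y
      have : ∀ s : Finset ι, ∃ n : ℕ,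
          a ^ n • (∑ i ∈ s, y ≫ Sigma.π f i ≫ Sigma.ι f i) = 0 := by
        intro s
        induction s using Finset.induction_on with
        | empty => exact ⟨0, by simp⟩
        | insert i s hi ih =>
          obtain ⟨n, hn⟩ := ih
          obtain ⟨m, hm⟩ := hf i k (y ≫ Sigma.π f i) a ha
          refine ⟨max n m, ?_⟩
          rw [Finset.sum_insert hi, smul_add, pow_kill_mono hn (le_max_left _ _), add_zero,
            ← Category.assoc, ← Linear.smul_comp, pow_kill_mono hm (le_max_right _ _), zero_comp]
      obtain ⟨n, hn⟩ := this s
      exact ⟨n, by rw [hs]; exact hn⟩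
    obtain ⟨n, hn⟩ := key (x ≫ e.hom)
    refine ⟨n, ?_⟩
    rw [← cancel_mono e.hom, Linear.smul_comp, hn, zero_comp]

lemma tors_sup (I J : Ideal R) :
    TorsSub S I ∩ TorsSub S J = TorsSub S (I + J) := by
  ext Y
  constructor
  · rintro ⟨h1, h2⟩ k x
    have : I + J ≤ (Ideal.torsionOf R _ x).radical :=
      sup_le (fun a ha => h1 k x a ha) (fun a ha => h2 k x a ha)
    exact fun a ha => this ha
  · intro h
    exact ⟨fun k x a ha => h k x a (Ideal.mem_sup_left ha),
      fun k x a ha => h k x a (Ideal.mem_sup_right ha)⟩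

lemma GenFam.koszul (hS : GenFam.{w} S) (I : Ideal R) (B : Set T) (hBS : ∀ k, S k ∈ B)
    (hB : ∀ {X Y Z : T} (f : X ⟶ Y) (g : Y ⟶ Z) (d : Z ⟶ X⟦(1 : ℤ)⟧),
      Triangle.mk f g d ∈ distinguishedTriangles → X ∈ B → Y ∈ B → Z ∈ B)
    (l : List R) (hl : ∀ a ∈ l, a ∈ I) {Y : T} (hY : Y ∈ TorsSub S I) (k : ℤ) (x : S k ⟶ Y) :
    ∃ (K : T) (i : S k ⟶ K) (g : K ⟶ Y), i ≫ g = x ∧ K ∈ B ∧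
      (∀ Y' ∈ TorsSub S I, ∀ g : K ⟶ Y', ∀ a ∈ I, ∃ n : ℕ, a ^ n • g = 0) ∧
      (∀ a ∈ l, ∃ n : ℕ, a ^ n • 𝟙 K = 0) := by
  induction l with
  | nil => exact ⟨S k, 𝟙 _, x, by simp, hBS k, fun Y' hY' g a ha => hY' k g a ha, by simp⟩
  | cons b l ih =>
    obtain ⟨K, i, g, hig, hKB, hK, hKl⟩ := ih (fun a ha => hl a (by simp [ha]))
    have hb : b ∈ I := hl b (by simp)
    obtain ⟨n, hn⟩ := hK Y hY g b hb
    obtain ⟨K', p, d, hT⟩ := distinguished_cocone_triangle (b ^ n • 𝟙 K)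
    obtain ⟨g', hg'⟩ := dtyo2 hT g (by rw [Linear.smul_comp, Category.id_comp, hn])
    have hbp : b ^ n • p = 0 := by
      have := dtz12 hT
      rwa [Linear.smul_comp, Category.id_comp] at this
    have hbd : b ^ n • d = 0 := by
      have := dtz31 hT
      rwa [Functor.map_smul, CategoryTheory.Functor.map_id, Linear.comp_smul, Category.comp_id] at this
    refine ⟨K', i ≫ p, g', by rw [Category.assoc, ← hg', hig], hB _ _ _ hT hKB hKB, ?_, ?_⟩
    · intro Y' hY' h a ha
      obtain ⟨n₁, h₁⟩ := hK Y' hY' (p ≫ h) a ha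
      rw [← Linear.comp_smul] at h₁
      obtain ⟨r, hr⟩ := dtyo3 hT _ h₁
      -- `r : K⟦1⟧ ⟶ Y'`
      let c : Y' ≅ (Y'⟦(-1 : ℤ)⟧)⟦(1 : ℤ)⟧ :=
        (shiftFunctorCompIsoId T (-1 : ℤ) (1 : ℤ) (by simp)).symm.app Y'
      obtain ⟨r', hr'⟩ := (shiftFunctor T (1 : ℤ)).map_surjective (r ≫ c.hom)
      obtain ⟨m, hm⟩ := hK (Y'⟦(-1 : ℤ)⟧)
        ((hS.tors_localizing I).shift_mem (-1) hY') r' a ha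
      have hmr : a ^ m • r = 0 := by
        rw [← cancel_mono c.hom, Linear.smul_comp, ← hr',
          ← Functor.map_smul, hm]
        simp
      refine ⟨m + n₁, ?_⟩
      rw [pow_add, mul_smul, hr, ← Linear.comp_smul, hmr, comp_zero]
    · intro a ha
      have hcases : ∃ m : ℕ, a ^ m • p = 0 ∧ a ^ m • d = 0 := by
        rcases List.mem_cons.1 ha with rfl | ha
        · exact ⟨n, hbp, hbd⟩
        · obtain ⟨m, hm⟩ := hKl a ha
          refine ⟨m, ?_, ?_⟩
          · rw [← Category.id_comp p, ← Linear.smul_comp, hm, zero_comp]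
          · rw [← Category.comp_id d, ← Linear.comp_smul, ← CategoryTheory.Functor.map_id, ← Functor.map_smul, hm]
            simp
      obtain ⟨m, hm1, hm2⟩ := hcases
      obtain ⟨r, hr⟩ := dtyo3 hT (a ^ m • 𝟙 K') (by
        rw [Linear.comp_smul, Category.comp_id, hm1])
      refine ⟨m + m, ?_⟩
      rw [pow_add, mul_smul, hr, ← Linear.smul_comp, hm2, zero_comp]

lemma GenFam.tors_subset [IsTriangulated T] (hS : GenFam.{w} S) (I : Ideal R) (hI : I.FG)
    (B : Set T) (hBS : ∀ k, S k ∈ B)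
    (hB : ∀ {X Y Z : T} (f : X ⟶ Y) (g : Y ⟶ Z) (d : Z ⟶ X⟦(1 : ℤ)⟧),
      Triangle.mk f g d ∈ distinguishedTriangles → X ∈ B → Y ∈ B → Z ∈ B)
    {L : Set T} (hL : IsLocalizingSub.{w} L)
    (hKL : ∀ K ∈ B, (∃ N : ℕ, ∀ a ∈ I ^ N, a • 𝟙 K = 0) → K ∈ L) :
    TorsSub S I ⊆ L := by
  obtain ⟨s, hs⟩ := hI
  apply hS.tower hL
  intro Y hY
  have hk := fun k x => hS.koszul I B hBS hB s.toList
    (fun a ha => by rw [← hs]; exact Ideal.subset_span (by simpa using ha)) hY k x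
  choose K i g hig hKB _ hKl using hk
  have hKI : ∀ k x, ∃ N : ℕ, ∀ a ∈ I ^ N, a • 𝟙 (K k x) = 0 := by
    intro k x
    have h1 : I ≤ (Ideal.torsionOf R _ (𝟙 (K k x))).radical := by
      rw [← hs, Ideal.span_le]
      intro a ha
      exact hKl k x a (by simpa using ha)
    obtain ⟨N, hN⟩ := Ideal.exists_pow_le_of_le_radical_of_fg h1 ⟨s, hs⟩
    exact ⟨N, fun a ha => hN ha⟩
  have hsm := hS.small
  let F : (Σ k : ℤ, Shrink.{w} (S k ⟶ Y)) → T := fun j => K j.1 ((equivShrink _).symm j.2)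
  let γ : ∐ F ⟶ Y := Sigma.desc (fun j => g j.1 ((equivShrink _).symm j.2))
  obtain ⟨Y', p, d, hT⟩ := distinguished_cocone_triangle γ
  refine ⟨∐ F, Y', γ, p, d, hT, ?_, ?_, ?_⟩
  · exact hL.coprod_mem F (Cofan.mk _ (Sigma.ι F)) (coproductIsCoproduct F)
      (fun j => hKL _ (hKB _ _) (hKI _ _))
  · have hl := hS.tors_localizing I
    refine hl.cone_mem _ hT ?_ hY
    refine hl.coprod_mem F (Cofan.mk _ (Sigma.ι F)) (coproductIsCoproduct F) (fun j => ?_)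
    intro k x a ha
    obtain ⟨N, hN⟩ := hKI j.1 ((equivShrink _).symm j.2)
    refine ⟨N, ?_⟩
    have := hN _ (Ideal.pow_mem_pow ha N)
    change a ^ N • 𝟙 (F j) = 0 at this
    rw [← Category.comp_id x, ← Linear.comp_smul, this, comp_zero]
  · intro k x
    have : x = (i k x ≫ eqToHom (by simp [F]) ≫ Sigma.ι F ⟨k, equivShrink _ x⟩) ≫ γ := by
      simp only [Category.assoc, γ, Sigma.ι_desc]
      have : ∀ x' (h : x' = x), x = i k x ≫ eqToHom (by rw [h]) ≫ g k x' := by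
        rintro x' rfl; simp [hig]
      exact this _ (by simp)
    rw [this, Category.assoc, dtz12 hT, comp_zero]

end TorsPart

section HomologyElements

variable {R : Type u} [CommRing R]

lemma hom_surj (K : CochainComplex (ModuleCat.{u} R) ℤ) (n : ℤ) (ξ : K.homology n) :
    ∃ c : K.cycles n, K.homologyπ n c = ξ :=
  (ModuleCat.epi_iff_surjective _).1 inferInstance ξ

lemma cyc_inj (K : CochainComplex (ModuleCat.{u} R) ℤ) (n : ℤ) :
    Function.Injective (K.iCycles n) :=
  (ModuleCat.mono_iff_injective _).1 inferInstance

lemma cyc_d (K : CochainComplex (ModuleCat.{u} R) ℤ) (n : ℤ) (c : K.cycles n) :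
    K.d n (n + 1) (K.iCycles n c) = 0 := by
  have := K.iCycles_d n (n + 1)
  rw [← ConcreteCategory.comp_apply, this]; rfl

lemma cyc_lift (K : CochainComplex (ModuleCat.{u} R) ℤ) (n : ℤ) (z : K.X n)
    (hz : K.d n (n + 1) z = 0) : ∃ c : K.cycles n, K.iCycles n c = z :=
  ⟨K.cyclesMk (C := ModuleCat R) z (n + 1) (by simp) hz,
    K.i_cyclesMk (C := ModuleCat R) z (n + 1) (by simp) hz⟩

lemma hom_zero (K : CochainComplex (ModuleCat.{u} R) ℤ) (n : ℤ) (c : K.cycles n) :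
    K.homologyπ n c = 0 ↔ ∃ y : K.X (n - 1), K.d (n - 1) n y = K.iCycles n c := by
  have h := ShortComplex.exact_of_g_is_cokernel (ShortComplex.mk _ _ (K.toCycles_comp_homologyπ (n - 1) n))
    (K.homologyIsCokernel (n - 1) n (by simp))
  rw [ShortComplex.moduleCat_exact_iff] at h
  constructor
  · intro hc
    obtain ⟨y, hy⟩ := h c hc
    refine ⟨y, ?_⟩
    rw [← K.toCycles_i, ConcreteCategory.comp_apply]
    exact congrArg _ hy
  · rintro ⟨y, hy⟩
    have : K.toCycles (n - 1) n y = c := by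
      apply cyc_inj
      rw [← hy, ← K.toCycles_i, ConcreteCategory.comp_apply]
    rw [← this, ← ConcreteCategory.comp_apply, K.toCycles_comp_homologyπ]; rfl

lemma hom_map {K L : CochainComplex (ModuleCat.{u} R) ℤ} (φ : K ⟶ L) (n : ℤ) (c : K.cycles n) :
    HomologicalComplex.homologyMap φ n (K.homologyπ n c) =
      L.homologyπ n (HomologicalComplex.cyclesMap φ n c) := by
  rw [← ConcreteCategory.comp_apply, HomologicalComplex.homologyπ_naturality,
    ConcreteCategory.comp_apply]

lemma cyc_map {K L : CochainComplex (ModuleCat.{u} R) ℤ} (φ : K ⟶ L) (n : ℤ) (c : K.cycles n) :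
    L.iCycles n (HomologicalComplex.cyclesMap φ n c) = φ.f n (K.iCycles n c) := by
  rw [← ConcreteCategory.comp_apply, HomologicalComplex.cyclesMap_i,
    ConcreteCategory.comp_apply]

lemma qis_iff {K L : CochainComplex (ModuleCat.{u} R) ℤ} (φ : K ⟶ L) :
    QuasiIso φ ↔
    (∀ n (z : L.X n), L.d n (n + 1) z = 0 → ∃ w : K.X n, K.d n (n + 1) w = 0 ∧
      ∃ y : L.X (n - 1), z = φ.f n w + L.d (n - 1) n y) ∧
    (∀ n (w : K.X n), K.d n (n + 1) w = 0 → (∃ y : L.X (n - 1), φ.f n w = L.d (n - 1) n y) →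
      ∃ v : K.X (n - 1), K.d (n - 1) n v = w) := by
  have h1 : QuasiIso φ ↔ ∀ n, Function.Bijective (HomologicalComplex.homologyMap φ n) := by
    rw [quasiIso_iff]
    refine forall_congr' fun n => ?_
    rw [quasiIsoAt_iff_isIso_homologyMap, ConcreteCategory.isIso_iff_bijective]
  rw [h1]
  constructor
  · intro h
    constructor
    · intro n z hz
      obtain ⟨c, rfl⟩ := cyc_lift L n z hz
      obtain ⟨ξ, hξ⟩ := (h n).2 (L.homologyπ n c)
      obtain ⟨b, rfl⟩ := hom_surj K n ξ
      rw [hom_map] at hξ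
      have : L.homologyπ n (c - HomologicalComplex.cyclesMap φ n b) = 0 := by
        rw [map_sub, hξ, sub_self]
      obtain ⟨y, hy⟩ := (hom_zero _ _ _).1 this
      refine ⟨K.iCycles n b, cyc_d _ _ _, y, ?_⟩
      rw [hy, map_sub, cyc_map]; abel
    · rintro n w hw ⟨y, hy⟩
      obtain ⟨c, rfl⟩ := cyc_lift K n w hw
      refine (hom_zero _ _ _).1 ((h n).1 ?_)
      rw [hom_map, map_zero, hom_zero]
      exact ⟨y, by rw [cyc_map, hy]⟩
  · rintro ⟨hs, hi⟩ n
    constructor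
    · rw [injective_iff_map_eq_zero]
      intro ξ hξ
      obtain ⟨c, rfl⟩ := hom_surj K n ξ
      rw [hom_map, hom_zero, cyc_map] at hξ
      obtain ⟨y, hy⟩ := hξ
      rw [hom_zero]
      exact hi n _ (cyc_d _ _ _) ⟨y, hy.symm⟩
    · intro ξ
      obtain ⟨c, rfl⟩ := hom_surj L n ξ
      obtain ⟨w, hw, y, hy⟩ := hs n _ (cyc_d _ _ c)
      obtain ⟨b, rfl⟩ := cyc_lift K n w hw
      refine ⟨K.homologyπ n b, ?_⟩
      rw [hom_map, ← sub_eq_zero, ← map_sub, hom_zero]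
      refine ⟨-y, ?_⟩
      rw [map_neg, map_sub, cyc_map, hy]; abel

end HomologyElements

section Coprod

variable {R : Type u} [CommRing R] {ι : Type u}

instance : HasColimitsOfSize.{u, u} (CochainComplex (ModuleCat.{u} R) ℤ) := ⟨fun _ _ => inferInstance⟩

lemma sigma_elem [DecidableEq ι] (f : ι → CochainComplex (ModuleCat.{u} R) ℤ) (n : ℤ) (z : (∐ f).X n) :
    ∃ s : Finset ι, z = ∑ i ∈ s, (Sigma.ι f i).f n ((Sigma.π f i).f n z) := by
  have hc := isColimitOfPreserves (HomologicalComplex.eval (ModuleCat.{u} R) (ComplexShape.up ℤ) n)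
    (coproductIsCoproduct f)
  -- the span of the images is everything
  let p : Submodule R ((∐ f).X n) := ⨆ i, LinearMap.range ((Sigma.ι f i).f n).hom
  have hp : p = ⊤ := by
    have : ModuleCat.ofHom p.mkQ = 0 := by
      apply hc.hom_ext
      rintro ⟨i⟩
      ext x
      change p.mkQ (((Sigma.ι f i).f n) x) = 0
      rw [Submodule.mkQ_apply, Submodule.Quotient.mk_eq_zero]
      exact Submodule.mem_iSup_of_mem i ⟨x, rfl⟩
    rw [← p.ker_mkQ, LinearMap.ker_eq_top]
    exact congrArg ModuleCat.Hom.hom this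
  have hz : z ∈ p := by rw [hp]; trivial
  have hιπ : ∀ i j (x : (f i).X n), (Sigma.π f j).f n ((Sigma.ι f i).f n x) =
      if h : i = j then (eqToHom (by rw [h]) : (f i).X n ⟶ (f j).X n) x else 0 := by
    intro i j x
    rw [← ConcreteCategory.comp_apply, ← HomologicalComplex.comp_f, Sigma.ι_π]
    split_ifs with h
    · subst h; simp
    · rfl
  induction hz using Submodule.iSup_induction' with
  | mem i x hx =>
    obtain ⟨y, rfl⟩ := hx
    refine ⟨{i}, ?_⟩
    rw [Finset.sum_singleton]
    erw [hιπ]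
    simp
  | zero => exact ⟨∅, by simp⟩
  | add x y hx hy h1 h2 =>
    obtain ⟨s, hs⟩ := h1
    obtain ⟨t, ht⟩ := h2
    have key : ∀ (x : (∐ f).X n) (s u : Finset ι),
        x = ∑ i ∈ s, (Sigma.ι f i).f n ((Sigma.π f i).f n x) → s ⊆ u →
        x = ∑ i ∈ u, (Sigma.ι f i).f n ((Sigma.π f i).f n x) := by
      intro x s u hs hsu
      refine hs.trans (Finset.sum_subset hsu ?_)
      intro j _ hj
      have : (Sigma.π f j).f n x = 0 := by
        rw [hs, map_sum]
        refine Finset.sum_eq_zero fun i hi => ?_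
        rw [hιπ, dif_neg]
        rintro rfl; exact hj hi
      rw [this, map_zero]
    refine ⟨s ∪ t, ?_⟩
    simp only [map_add, Finset.sum_add_distrib]
    rw [← key x s _ hs Finset.subset_union_left, ← key y t _ ht Finset.subset_union_right]

lemma hcomm {K L : CochainComplex (ModuleCat.{u} R) ℤ} (φ : K ⟶ L) (i j : ℤ) (x : K.X i) :
    φ.f j (K.d i j x) = L.d i j (φ.f i x) := by
  rw [← ConcreteCategory.comp_apply, ← ConcreteCategory.comp_apply, φ.comm]

lemma hcompf {K L M : CochainComplex (ModuleCat.{u} R) ℤ} (φ : K ⟶ L) (ψ : L ⟶ M) (i : ℤ)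
    (x : K.X i) : ψ.f i (φ.f i x) = (φ ≫ ψ).f i x := by
  rw [HomologicalComplex.comp_f, ConcreteCategory.comp_apply]

lemma sigma_qis {f g : ι → CochainComplex (ModuleCat.{u} R) ℤ} (φ : ∀ i, f i ⟶ g i)
    (h : ∀ i, QuasiIso (φ i)) : QuasiIso (Limits.Sigma.map φ) := by
  classical
  have h' := fun i => (qis_iff (φ i)).1 (h i)
  have hπ : ∀ i, Limits.Sigma.map φ ≫ Sigma.π g i = Sigma.π f i ≫ φ i := by
    intro i
    apply Sigma.hom_ext
    intro j
    rw [Sigma.ι_map_assoc, Sigma.ι_π, Sigma.ι_π_assoc]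
    split_ifs with h
    · subst h; simp
    · simp
  rw [qis_iff]
  constructor
  · intro n z hz
    obtain ⟨s, hs⟩ := sigma_elem g n z
    have hz' : ∀ i, (g i).d n (n + 1) ((Sigma.π g i).f n z) = 0 := by
      intro i; rw [← hcomm, hz, map_zero]
    choose w hw y hy using fun i => (h' i).1 n _ (hz' i)
    refine ⟨∑ i ∈ s, (Sigma.ι f i).f n (w i), ?_, ∑ i ∈ s, (Sigma.ι g i).f (n - 1) (y i), ?_⟩
    · rw [map_sum]
      refine Finset.sum_eq_zero fun i _ => ?_
      rw [← hcomm, hw, map_zero]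
    · rw [map_sum, map_sum, ← Finset.sum_add_distrib, hs]
      refine Finset.sum_congr rfl fun i _ => ?_
      rw [hy i, map_add, hcompf, hcompf, ← hcomm, Sigma.ι_map]
  · rintro n w hw ⟨y, hy⟩
    obtain ⟨s, hs⟩ := sigma_elem f n w
    have hw' : ∀ i, (f i).d n (n + 1) ((Sigma.π f i).f n w) = 0 := by
      intro i; rw [← hcomm, hw, map_zero]
    choose v hv using fun i => (h' i).2 n _ (hw' i) ⟨(Sigma.π g i).f _ y, by
      rw [hcompf, ← hπ, ← hcompf, hy, hcomm]⟩
    refine ⟨∑ i ∈ s, (Sigma.ι f i).f (n - 1) (v i), ?_⟩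
    rw [map_sum, hs]
    refine Finset.sum_congr rfl fun i _ => ?_
    rw [← hcomm, hv]

lemma sigma_ext {f : ι → CochainComplex (ModuleCat.{u} R) ℤ} {i : ℤ} {M : ModuleCat.{u} R}
    {p q : (∐ f).X i ⟶ M} (h : ∀ a, (Sigma.ι f a).f i ≫ p = (Sigma.ι f a).f i ≫ q) : p = q := by
  apply (isColimitOfPreserves (HomologicalComplex.eval (ModuleCat.{u} R) (ComplexShape.up ℤ) i)
    (coproductIsCoproduct f)).hom_ext
  rintro ⟨a⟩
  exact h a

lemma sigma_desc {f : ι → CochainComplex (ModuleCat.{u} R) ℤ} {i : ℤ} {M : ModuleCat.{u} R}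
    (h : ∀ a, (f a).X i ⟶ M) : ∃ p : (∐ f).X i ⟶ M, ∀ a, (Sigma.ι f a).f i ≫ p = h a := by
  have hc := (isColimitOfPreserves (HomologicalComplex.eval (ModuleCat.{u} R) (ComplexShape.up ℤ) i)
    (coproductIsCoproduct f))
  refine ⟨hc.desc (Cocone.mk M (Discrete.natTrans (fun a => h a.as))), fun a => hc.fac _ ⟨a⟩⟩

/-- Glue null-homotopies on a coproduct. -/
lemma sigmaHomotopy {f : ι → CochainComplex (ModuleCat.{u} R) ℤ}
    {Z : CochainComplex (ModuleCat.{u} R) ℤ} (g : ∐ f ⟶ Z)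
    (h : ∀ i, Homotopy (Sigma.ι f i ≫ g) 0) : Nonempty (Homotopy g 0) := by
  choose H hH using fun i j => sigma_desc (fun a => (h a).hom i j)
  exact ⟨{
    hom := H
    zero := fun i j hij => by
      apply sigma_ext
      intro a
      rw [comp_zero, hH]
      exact (h a).zero i j hij
    comm := fun i => by
      apply sigma_ext
      intro a
      have := (h a).comm i
      rw [HomologicalComplex.comp_f] at this
      rw [this, dNext_eq _ (show (ComplexShape.up ℤ).Rel i (i + 1) from rfl),
        dNext_eq _ (show (ComplexShape.up ℤ).Rel i (i + 1) from rfl),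
        prevD_eq _ (show (ComplexShape.up ℤ).Rel (i - 1) i by simp),
        prevD_eq _ (show (ComplexShape.up ℤ).Rel (i - 1) i by simp)]
      simp only [Preadditive.comp_add, HomologicalComplex.zero_f, comp_zero, add_zero]
      rw [← Category.assoc, ← Category.assoc, (Sigma.ι f a).comm, Category.assoc, hH, hH] }⟩

end Coprod

section DCoprod

open DerivedCategory

variable {R : Type u} [CommRing R] [HasDerivedCategory.{w'} (ModuleCat.{u} R)]

lemma Q_zero {X Z : CochainComplex (ModuleCat.{u} R) ℤ} (h : X ⟶ Z) (hh : Q.map h = 0) :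
    ∃ (V : CochainComplex (ModuleCat.{u} R) ℤ) (t : V ⟶ X), QuasiIso t ∧
      Nonempty (Homotopy (t ≫ h) 0) := by
  have h1 : Qh.map ((HomotopyCategory.quotient _ _).map h) =
      Qh.map ((HomotopyCategory.quotient _ _).map (0 : X ⟶ Z)) := by
    refine Eq.trans (b := 0) hh ?_
    rw [Functor.map_zero, Functor.map_zero]; rfl
  rw [MorphismProperty.map_eq_iff_precomp Qh (HomotopyCategory.quasiIso (ModuleCat.{u} R) _)] at h1
  obtain ⟨V, t, ht, fac⟩ := h1
  obtain ⟨V, rfl⟩ := HomotopyCategory.quotient_obj_surjective V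
  obtain ⟨t, rfl⟩ := (HomotopyCategory.quotient _ _).map_surjective t
  refine ⟨V, t, ?_, ?_⟩
  · rw [← isIso_Q_map_iff_quasiIso]
    exact (isIso_Qh_map_iff _).2 ht
  · rw [← Functor.map_comp, ← Functor.map_comp, comp_zero] at fac
    exact ⟨HomotopyCategory.homotopyOfEq _ _ fac⟩

lemma Q_null {X Z : CochainComplex (ModuleCat.{u} R) ℤ} {h : X ⟶ Z} (hh : Homotopy h 0) :
    Q.map h = 0 := by
  have := HomotopyCategory.eq_of_homotopy _ _ hh
  have h2 : Qh.map ((HomotopyCategory.quotient _ _).map h) =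
    Qh.map ((HomotopyCategory.quotient _ _).map (0 : X ⟶ Z)) := by rw [this]
  refine h2.trans ?_
  rw [Functor.map_zero, Functor.map_zero]; rfl

variable {ι : Type u}

lemma Q_hom_ext (f : ι → CochainComplex (ModuleCat.{u} R) ℤ) {Y : DerivedCategory (ModuleCat.{u} R)}
    (φ : Q.obj (∐ f) ⟶ Y) (h : ∀ i, Q.map (Sigma.ι f i) ≫ φ = 0) : φ = 0 := by
  obtain ⟨Z, ⟨e⟩⟩ : ∃ Z : CochainComplex (ModuleCat.{u} R) ℤ, Nonempty (Y ≅ Q.obj Z) :=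
    ⟨_, ⟨(Q.objObjPreimageIso Y).symm⟩⟩
  rw [← cancel_mono e.hom, zero_comp]
  have h' : ∀ i, Q.map (Sigma.ι f i) ≫ φ ≫ e.hom = 0 := fun i => by
    rw [← Category.assoc, h, zero_comp]
  obtain ⟨Z', g, s, hs, hg⟩ := left_fac (φ ≫ e.hom)
  rw [hg] at h' ⊢
  have h2 : ∀ i, Q.map (Sigma.ι f i ≫ g) = 0 := fun i => by
    rw [← cancel_mono (inv (Q.map s)), Functor.map_comp, Category.assoc, h', zero_comp]
  choose V t ht hn using fun i => Q_zero _ (h2 i)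
  have hq := sigma_qis t ht
  have : IsIso (Q.map (Limits.Sigma.map t)) := (isIso_Q_map_iff_quasiIso _ _).2 hq
  obtain ⟨hom⟩ := sigmaHomotopy (Limits.Sigma.map t ≫ g) (fun i => by
    rw [Sigma.ι_map_assoc]; exact (hn i).some)
  have h3 := Q_null hom
  have h4 : Q.map g = 0 := by
    rw [← cancel_epi (Q.map (Limits.Sigma.map t)), ← Functor.map_comp, h3, comp_zero]
  rw [h4, zero_comp]

lemma Q_desc (f : ι → CochainComplex (ModuleCat.{u} R) ℤ) {Y : DerivedCategory (ModuleCat.{u} R)}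
    (φ : ∀ i, Q.obj (f i) ⟶ Y) : ∃ ψ : Q.obj (∐ f) ⟶ Y, ∀ i, Q.map (Sigma.ι f i) ≫ ψ = φ i := by
  obtain ⟨Z, ⟨e⟩⟩ : ∃ Z : CochainComplex (ModuleCat.{u} R) ℤ, Nonempty (Y ≅ Q.obj Z) :=
    ⟨_, ⟨(Q.objObjPreimageIso Y).symm⟩⟩
  choose V s hs g hg using fun i => right_fac (φ i ≫ e.hom)
  have hq := sigma_qis s (fun i => (isIso_Q_map_iff_quasiIso _ _).1 (hs i))
  have : IsIso (Q.map (Limits.Sigma.map s)) := (isIso_Q_map_iff_quasiIso _ _).2 hq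
  refine ⟨inv (Q.map (Limits.Sigma.map s)) ≫ Q.map (Sigma.desc g) ≫ e.inv, fun i => ?_⟩
  have h1 : Q.map (Sigma.ι f i) ≫ inv (Q.map (Limits.Sigma.map s)) =
      inv (Q.map (s i)) ≫ Q.map (Sigma.ι V i) := by
    rw [IsIso.comp_inv_eq, Category.assoc, ← Functor.map_comp, Sigma.ι_map, Functor.map_comp,
      IsIso.inv_hom_id_assoc]
  have h2 : Q.map (Sigma.ι V i) ≫ Q.map (Sigma.desc g) = Q.map (g i) := by
    rw [← Functor.map_comp, Sigma.ι_desc]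
  rw [← cancel_mono e.hom, hg, ← Category.assoc, h1]
  simp only [Category.assoc, Iso.inv_hom_id, Category.comp_id]
  rw [h2]

/-- `Q` commutes with coproducts. -/
noncomputable def QColim (f : ι → CochainComplex (ModuleCat.{u} R) ℤ) :
    IsColimit (Cofan.mk (Q.obj (∐ f)) (fun i => Q.map (Sigma.ι f i)) :
      Cofan (fun i => (Q.obj (f i) : DerivedCategory (ModuleCat.{u} R)))) :=
  Cofan.IsColimit.mk _ (fun s => (Q_desc f s.inj).choose)
    (fun s i => (Q_desc f s.inj).choose_spec i)
    (fun s m hm => by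
      rw [← sub_eq_zero]
      apply Q_hom_ext
      intro i
      rw [Preadditive.comp_sub, (Q_desc f s.inj).choose_spec i, sub_eq_zero]
      exact hm i)

instance D_hasCoproducts : HasCoproducts.{u} (DerivedCategory (ModuleCat.{u} R)) := by
  intro ι
  refine ⟨fun F => ?_⟩
  have : HasColimit (Discrete.functor (fun i : ι =>
      (Q.obj (Q.objPreimage (F.obj ⟨i⟩)) : DerivedCategory (ModuleCat.{u} R)))) :=
    ⟨⟨_, QColim (fun i : ι => Q.objPreimage (F.obj ⟨i⟩))⟩⟩
  exact hasColimit_of_iso (Discrete.natIso (fun i => (Q.objObjPreimageIso (F.obj i)).symm) :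
    F ≅ Discrete.functor (fun i : ι =>
      (Q.obj (Q.objPreimage (F.obj ⟨i⟩)) : DerivedCategory (ModuleCat.{u} R))))

end DCoprod

section Unit

open DerivedCategory

variable (R : Type u) [CommRing R]

/-- The unit placed in degree `k`. -/
noncomputable def Pc (k : ℤ) : CochainComplex (ModuleCat.{u} R) ℤ :=
  (HomologicalComplex.single (ModuleCat.{u} R) (ComplexShape.up ℤ) k).obj (ModuleCat.of R R)

/-- The unit placed in degree `k`, in the derived category. -/
noncomputable def Sc [HasDerivedCategory.{w'} (ModuleCat.{u} R)] (k : ℤ) :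
    DerivedCategory (ModuleCat.{u} R) := Q.obj (Pc R k)

instance Pc_kproj (k : ℤ) : (Pc R k).IsKProjective := by
  have h1 : (Pc R k).IsStrictlyLE k := by
    rw [CochainComplex.isStrictlyLE_iff]
    intro i hi
    exact HomologicalComplex.isZero_single_obj_X _ _ _ _ (by omega)
  have hR : Projective (ModuleCat.of R R) := ModuleCat.projective_of_free (Module.Basis.singleton PUnit.{u+1} R)
  have h2 : ∀ n, Projective ((Pc R k).X n) := by
    intro n
    by_cases h : n = k
    · subst h
      exact Projective.of_iso (HomologicalComplex.singleObjXSelf _ _ _).symm hR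
    · exact (HomologicalComplex.isZero_single_obj_X _ _ _ _ h).projective
  exact CochainComplex.isKProjective_of_projective _ k

variable {R}

/-- Generator in degree `k`. -/
noncomputable def gen (k : ℤ) : (Pc R k).X k :=
  (HomologicalComplex.singleObjXSelf (ComplexShape.up ℤ) k (ModuleCat.of R R)).inv (1 : R)

/-- The element corresponding to a map. -/
noncomputable def el {k : ℤ} {Y : CochainComplex (ModuleCat.{u} R) ℤ} (g : Pc R k ⟶ Y) : Y.X k :=
  g.f k (gen k)

lemma el_add {k : ℤ} {Y : CochainComplex (ModuleCat.{u} R) ℤ} (g h : Pc R k ⟶ Y) :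
    el (g + h) = el g + el h := rfl

lemma el_sub {k : ℤ} {Y : CochainComplex (ModuleCat.{u} R) ℤ} (g h : Pc R k ⟶ Y) :
    el (g - h) = el g - el h := rfl

lemma el_sum {k : ℤ} {Y : CochainComplex (ModuleCat.{u} R) ℤ} {ι : Type*} (s : Finset ι) (g : ι → (Pc R k ⟶ Y)) :
    el (∑ i ∈ s, g i) = ∑ i ∈ s, el (g i) := by
  exact map_sum (AddMonoidHom.mk' el el_add) g s

lemma el_comp {k : ℤ} {Y Z : CochainComplex (ModuleCat.{u} R) ℤ} (g : Pc R k ⟶ Y) (h : Y ⟶ Z) :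
    el (g ≫ h) = h.f k (el g) := by
  rw [el, el, hcompf]

lemma el_cycle {k : ℤ} {Y : CochainComplex (ModuleCat.{u} R) ℤ} (g : Pc R k ⟶ Y) :
    Y.d k (k + 1) (el g) = 0 := by
  rw [el, ← hcomm]
  have : (Pc R k).d k (k + 1) = 0 := rfl
  rw [this]
  exact map_zero _

lemma R_ext {M : ModuleCat.{u} R} {f g : ModuleCat.of R R ⟶ M} (h : f (1 : R) = g (1 : R)) : f = g := by
  apply ModuleCat.hom_ext
  exact LinearMap.ext_ring h

lemma el_inj {k : ℤ} {Y : CochainComplex (ModuleCat.{u} R) ℤ} {g h : Pc R k ⟶ Y}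
    (hgh : el g = el h) : g = h := by
  apply HomologicalComplex.from_single_hom_ext
  rw [← cancel_epi (HomologicalComplex.singleObjXSelf (ComplexShape.up ℤ) k (ModuleCat.of R R)).inv]
  exact R_ext hgh

lemma el_surj {k : ℤ} {Y : CochainComplex (ModuleCat.{u} R) ℤ} (z : Y.X k)
    (hz : Y.d k (k + 1) z = 0) : ∃ g : Pc R k ⟶ Y, el g = z := by
  let φ : ModuleCat.of R R ⟶ Y.X k := ModuleCat.ofHom (LinearMap.toSpanSingleton R _ z)
  have hφ : φ (1 : R) = z := one_smul R z
  refine ⟨HomologicalComplex.mkHomFromSingle φ ?_, ?_⟩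
  · rintro j rfl
    apply R_ext
    rw [ConcreteCategory.comp_apply, hφ, hz]; rfl
  · change (HomologicalComplex.mkHomFromSingle φ _).f k (gen k) = z
    rw [HomologicalComplex.mkHomFromSingle_f, gen, ← ConcreteCategory.comp_apply,
      Iso.inv_hom_id_assoc, hφ]

lemma null_single {A : ModuleCat.{u} R} {k : ℤ} {Y : CochainComplex (ModuleCat.{u} R) ℤ}
    (g : (CochainComplex.singleFunctor (ModuleCat.{u} R) k).obj A ⟶ Y) (φ : A ⟶ Y.X (k - 1))
    (h : (HomologicalComplex.singleObjXSelf (ComplexShape.up ℤ) k A).inv ≫ g.f k = φ ≫ Y.d (k - 1) k) :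
    Nonempty (Homotopy g 0) := by
  refine ⟨(CochainComplex.HomComplex.Cochain.equivHomotopy g 0).symm
      ⟨CochainComplex.HomComplex.Cochain.fromSingleMk φ (by omega), ?_⟩⟩
  rw [CochainComplex.HomComplex.Cochain.δ_fromSingleMk φ (show k + (-1) = k - 1 by omega) 0 k (by simp),
      CochainComplex.HomComplex.Cochain.ofHom_zero, add_zero]
  apply (CochainComplex.HomComplex.Cochain.fromSingleEquiv (p := k) (q := k) (n := 0) (by simp)).injective
  rw [CochainComplex.HomComplex.Cochain.fromSingleEquiv_fromSingleMk, ← h]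
  simp [CochainComplex.HomComplex.Cochain.fromSingleEquiv]

variable [HasDerivedCategory.{w'} (ModuleCat.{u} R)]

lemma Sc_lift {k : ℤ} {Y : CochainComplex (ModuleCat.{u} R) ℤ} (x : Sc R k ⟶ Q.obj Y) :
    ∃ g : Pc R k ⟶ Y, Q.map g = x := by
  obtain ⟨g, hg⟩ := (CochainComplex.IsKProjective.Qh_map_bijective (Pc R k)
    ((HomotopyCategory.quotient _ _).obj Y)).2 x
  obtain ⟨g, rfl⟩ := (HomotopyCategory.quotient _ _).map_surjective g
  exact ⟨g, hg⟩

lemma Sc_zero {k : ℤ} {Y : CochainComplex (ModuleCat.{u} R) ℤ} (g : Pc R k ⟶ Y) :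
    Q.map g = 0 ↔ ∃ y : Y.X (k - 1), Y.d (k - 1) k y = el g := by
  constructor
  · intro h
    have h1 : (HomotopyCategory.quotient _ _).map g =
        (HomotopyCategory.quotient (ModuleCat.{u} R) (ComplexShape.up ℤ)).map 0 := by
      apply (CochainComplex.IsKProjective.Qh_map_bijective (Pc R k)
        ((HomotopyCategory.quotient _ _).obj Y)).1
      refine Eq.trans (b := 0) h ?_
      rw [Functor.map_zero, Functor.map_zero]; rfl
    have ho := HomotopyCategory.homotopyOfEq _ _ h1
    have h2 := ho.comm k
    rw [dNext_eq _ (show (ComplexShape.up ℤ).Rel k (k + 1) from rfl),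
        prevD_eq _ (show (ComplexShape.up ℤ).Rel (k - 1) k by simp)] at h2
    have : (Pc R k).d k (k + 1) = 0 := rfl
    rw [this, zero_comp, zero_add, HomologicalComplex.zero_f, add_zero] at h2
    refine ⟨ho.hom k (k - 1) (gen k), ?_⟩
    rw [el, h2, ConcreteCategory.comp_apply]
  · rintro ⟨y, hy⟩
    let φ : ModuleCat.of R R ⟶ Y.X (k - 1) := ModuleCat.ofHom (LinearMap.toSpanSingleton R _ y)
    have hφ : φ (1 : R) = y := one_smul R y
    obtain ⟨ho⟩ := null_single (A := ModuleCat.of R R) (k := k) g φ (by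
      apply R_ext
      rw [ConcreteCategory.comp_apply, hφ, hy]
      rfl)
    exact Q_null ho


lemma Sc_isIso {X Y : DerivedCategory (ModuleCat.{u} R)} (f : X ⟶ Y)
    (h : ∀ k, Function.Bijective (fun x : Sc R k ⟶ X => x ≫ f)) : IsIso f := by
  let a := Q.objObjPreimageIso X
  let b := Q.objObjPreimageIso Y
  obtain ⟨Z, g, s, hs, hg⟩ := left_fac (a.hom ≫ f ≫ b.inv)
  have hg' : Q.map g = (a.hom ≫ f ≫ b.inv) ≫ Q.map s := by
    rw [hg, Category.assoc, IsIso.inv_hom_id, Category.comp_id]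
  have hb : ∀ k, Function.Bijective (fun x : Sc R k ⟶ Q.obj (Q.objPreimage X) => x ≫ Q.map g) := by
    intro k
    constructor
    · intro x y hxy
      simp only [hg', ← Category.assoc, cancel_mono] at hxy
      have := (h k).1 hxy
      rwa [cancel_mono] at this
    · intro y
      obtain ⟨x, hx⟩ := (h k).2 (y ≫ inv (Q.map s) ≫ b.hom)
      refine ⟨x ≫ a.inv, ?_⟩
      have hx' : x ≫ f = y ≫ inv (Q.map s) ≫ b.hom := hx
      simp only [hg', Category.assoc, Iso.inv_hom_id_assoc]
      rw [← Category.assoc, hx']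
      simp
  have hq : QuasiIso g := by
    rw [qis_iff]
    constructor
    · intro n z hz
      obtain ⟨ψ, rfl⟩ := el_surj z hz
      obtain ⟨x, hx⟩ := (hb n).2 (Q.map ψ)
      obtain ⟨w, rfl⟩ := Sc_lift x
      have : Q.map (ψ - w ≫ g) = 0 := by
        rw [Functor.map_sub, Functor.map_comp, sub_eq_zero]; exact hx.symm
      obtain ⟨y, hy⟩ := (Sc_zero _).1 this
      refine ⟨el w, el_cycle w, y, ?_⟩
      rw [hy, el_sub, el_comp]; abel
    · rintro n z hz ⟨y, hy⟩
      obtain ⟨ψ, rfl⟩ := el_surj z hz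
      rw [← Sc_zero]
      apply (hb n).1
      change Q.map ψ ≫ Q.map g = 0 ≫ Q.map g
      rw [← Functor.map_comp, zero_comp, Sc_zero, el_comp]
      exact ⟨y, hy.symm⟩
  have : IsIso (Q.map g) := (isIso_Q_map_iff_quasiIso _ _).2 hq
  have h3 : f = a.inv ≫ Q.map g ≫ inv (Q.map s) ≫ b.hom := by
    rw [hg']; simp
  rw [h3]
  infer_instance

lemma Sc_small (k : ℤ) (Y : DerivedCategory (ModuleCat.{u} R)) : Small.{u} (Sc R k ⟶ Y) := by
  have : Function.Surjective (fun g : Pc R k ⟶ Q.objPreimage Y => Q.map g ≫ (Q.objObjPreimageIso Y).hom) := by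
    intro x
    obtain ⟨g, hg⟩ := Sc_lift (x ≫ (Q.objObjPreimageIso Y).inv)
    exact ⟨g, (Iso.eq_comp_inv _).1 hg⟩
  exact small_of_surjective this

lemma Sc_cpt {ι : Type u} [DecidableEq ι] (f : ι → DerivedCategory (ModuleCat.{u} R)) (k : ℤ)
    (x : Sc R k ⟶ ∐ f) : ∃ s : Finset ι, x = ∑ i ∈ s, x ≫ Sigma.π f i ≫ Sigma.ι f i := by
  let W := fun i => Q.objPreimage (f i)
  let a : ∀ i, Q.obj (W i) ≅ f i := fun i => Q.objObjPreimageIso (f i)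
  let ic := (Sigma.mapIso a).symm ≪≫
    (coproductIsCoproduct _).coconePointUniqueUpToIso (QColim (R := R) W)
  have h0 : ∀ i, Sigma.ι (fun i => Q.obj (W i)) i ≫ ((coproductIsCoproduct _).coconePointUniqueUpToIso
      (QColim (R := R) W)).hom = Q.map (Sigma.ι W i) := fun i =>
    (coproductIsCoproduct _).comp_coconePointUniqueUpToIso_hom (QColim (R := R) W) ⟨i⟩
  have h1 : ∀ i, Sigma.ι f i ≫ ic.hom = (a i).inv ≫ Q.map (Sigma.ι W i) := by
    intro i
    rw [← h0]
    simp [ic]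
  have h2 : ∀ i, Q.map (Sigma.ι W i) ≫ ic.inv = (a i).hom ≫ Sigma.ι f i := by
    intro i
    rw [Iso.comp_inv_eq, Category.assoc, h1, Iso.hom_inv_id_assoc]
  have h3 : ∀ i, Q.map (Sigma.π W i) ≫ (a i).hom = ic.inv ≫ Sigma.π f i := by
    intro i
    rw [← cancel_epi ic.hom, Iso.hom_inv_id_assoc]
    apply Sigma.hom_ext
    intro j
    rw [← Category.assoc, h1, Category.assoc, ← Category.assoc (Q.map _), ← Functor.map_comp,
      Sigma.ι_π, Sigma.ι_π]
    split_ifs with h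
    · subst h; simp
    · simp
  obtain ⟨g, hg⟩ := Sc_lift (x ≫ ic.hom)
  obtain ⟨s, hs⟩ := sigma_elem W k (el g)
  have hg2 : g = ∑ i ∈ s, g ≫ Sigma.π W i ≫ Sigma.ι W i := by
    apply el_inj
    rw [el_sum]
    refine hs.trans (Finset.sum_congr rfl fun i _ => ?_)
    rw [el_comp, hcompf]
  have hx : x = Q.map g ≫ ic.inv := (Iso.eq_comp_inv ic).2 hg.symm
  refine ⟨s, ?_⟩
  rw [hx]
  conv_lhs => rw [hg2]
  rw [Functor.map_sum, Preadditive.sum_comp]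
  refine Finset.sum_congr rfl fun i _ => ?_
  rw [Functor.map_comp, Functor.map_comp, Category.assoc, Category.assoc, h2,
    ← Category.assoc (Q.map (Sigma.π W i)), h3]
  simp only [Category.assoc]
  exact (Category.assoc _ _ _).symm

lemma Sc_shift (k n : ℤ) : Nonempty (Sc R k ≅ (Sc R (k + n))⟦n⟧) :=
  ⟨(((singleFunctors (ModuleCat.{u} R)).shiftIso n k (k + n) (by omega)).app (ModuleCat.of R R)).symm⟩

lemma Sc_gen : GenFam.{u} (Sc R) where
  shift_iso := Sc_shift
  isIso := Sc_isIso
  cpt := Sc_cpt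
  small := Sc_small

end Unit

section ModPart

open DerivedCategory

variable {R : Type u} [CommRing R] [HasDerivedCategory.{w'} (ModuleCat.{u} R)]

variable (R) in
/-- The functor placing a module in degree `n`. -/
noncomputable abbrev sg (n : ℤ) : ModuleCat.{u} R ⥤ CochainComplex (ModuleCat.{u} R) ℤ :=
  HomologicalComplex.single (ModuleCat.{u} R) (ComplexShape.up ℤ) n

lemma tri_mid {X Y Y' Z : DerivedCategory (ModuleCat.{u} R)} {f : X ⟶ Y} {g : Y ⟶ Z} {d : Z ⟶ X⟦(1 : ℤ)⟧}
    (h : Triangle.mk f g d ∈ distinguishedTriangles) (e : Y' ≅ Y) :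
    Triangle.mk (f ≫ e.inv) (e.hom ≫ g) d ∈ distinguishedTriangles := by
  refine isomorphic_distinguished _ h _ ?_
  refine Triangle.isoMk _ _ (Iso.refl _) e (Iso.refl _) ?_ ?_ ?_
  · change (f ≫ e.inv) ≫ e.hom = 𝟙 X ≫ f
    simp
  · change (e.hom ≫ g) ≫ 𝟙 Z = e.hom ≫ g
    simp
  · change d ≫ (𝟙 X)⟦(1 : ℤ)⟧' = 𝟙 Z ≫ d
    simp

lemma ses_tri {A B C : ModuleCat.{u} R} (f : A ⟶ B) (g : B ⟶ C) (w : f ≫ g = 0)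
    (hS : (ShortComplex.mk f g w).ShortExact) (n : ℤ) :
    ∃ d, Triangle.mk (Q.map ((sg R n).map f)) (Q.map ((sg R n).map g)) d ∈
      distinguishedTriangles (C := DerivedCategory (ModuleCat.{u} R)) :=
  ⟨_, DerivedCategory.triangleOfSES_distinguished (hS.map_of_exact (sg R n))⟩

lemma sg_shift (k n : ℤ) (M : ModuleCat.{u} R) :
    Nonempty (Q.obj ((sg R k).obj M) ≅ (Q.obj ((sg R (k + n)).obj M))⟦n⟧) :=
  ⟨(((singleFunctors (ModuleCat.{u} R)).shiftIso n k (k + n) (by omega)).app M).symm⟩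

lemma sg_mem {L : Set (DerivedCategory (ModuleCat.{u} R))} (hL : IsLocalizingSub.{u} L)
    {M : ModuleCat.{u} R} (h : smod R M ∈ L) (n : ℤ) : Q.obj ((sg R n).obj M) ∈ L := by
  obtain ⟨e⟩ := sg_shift (R := R) 0 n M
  rw [zero_add] at e
  exact hL.of_shift n (hL.mem_of_iso e h)

lemma sg_coprod_mem {L : Set (DerivedCategory (ModuleCat.{u} R))} (hL : IsLocalizingSub.{u} L)
    {ι : Type u} (M : ι → ModuleCat.{u} R) (n : ℤ) (h : ∀ i, Q.obj ((sg R n).obj (M i)) ∈ L) :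
    Q.obj ((sg R n).obj (∐ M)) ∈ L := by
  have h1 := hL.coprod_mem _ _ (QColim (fun i => (sg R n).obj (M i))) h
  exact hL.mem_of_iso (Q.mapIso (PreservesCoproduct.iso (sg R n) M).symm) h1

lemma sg_d {R : Type u} [CommRing R] {k n : ℤ} {M : ModuleCat.{u} R} (z : ((sg R n).obj M).X k) (j : ℤ) :
    ((sg R n).obj M).d k j z = 0 := rfl

lemma sg_ghost {A B : ModuleCat.{u} R} (f : A ⟶ B) [Epi f] (n k : ℤ) (x : Sc R k ⟶ Q.obj ((sg R n).obj B)) :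
    ∃ y : Sc R k ⟶ Q.obj ((sg R n).obj A), x = y ≫ Q.map ((sg R n).map f) := by
  obtain ⟨g, rfl⟩ := Sc_lift x
  have he : Epi (((sg R n).map f).f k) := inferInstance
  obtain ⟨z, hz⟩ := (ModuleCat.epi_iff_surjective _).1 he (el g)
  obtain ⟨w, hw⟩ := el_surj z (sg_d z _)
  refine ⟨Q.map w, ?_⟩
  refine Eq.trans ?_ (Q.map_comp w ((sg R n).map f))
  congr 1
  apply el_inj
  rw [el_comp, hw, hz]

lemma mod_kill1 {L : Set (DerivedCategory (ModuleCat.{u} R))} (hL : IsLocalizingSub.{u} L)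
    (I : Ideal R) (h : smod R (ModuleCat.of R (R ⧸ I)) ∈ L) (n : ℤ) (M : ModuleCat.{u} R)
    (hM : ∀ r ∈ I, ∀ m : M, r • m = 0) : Q.obj ((sg R n).obj M) ∈ L := by
  let P : Set (DerivedCategory (ModuleCat.{u} R)) :=
    {Y | ∃ (n : ℤ) (M : ModuleCat.{u} R), (∀ r ∈ I, ∀ m : M, r • m = 0) ∧
      Nonempty (Y ≅ Q.obj ((sg R n).obj M))}
  suffices hP : P ⊆ L from hP ⟨n, M, hM, ⟨Iso.refl _⟩⟩
  apply Sc_gen.tower hL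
  rintro Y ⟨n, M, hM, ⟨e⟩⟩
  let F : M → ModuleCat.{u} R := fun _ => ModuleCat.of R (R ⧸ I)
  have hc : ∀ m : M, I ≤ LinearMap.ker (LinearMap.toSpanSingleton R M m) := by
    intro m r hr
    exact hM r hr m
  let φ : ∐ F ⟶ M := Sigma.desc (fun m => ModuleCat.ofHom (I.liftQ (LinearMap.toSpanSingleton R M m) (hc m)))
  have hφ : Epi φ := by
    rw [ModuleCat.epi_iff_surjective]
    intro m
    refine ⟨Sigma.ι F m (Ideal.Quotient.mk I 1), ?_⟩
    rw [← ConcreteCategory.comp_apply, Sigma.ι_desc]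
    exact one_smul R m
  have hF : ∀ r ∈ I, ∀ z : (∐ F : ModuleCat.{u} R), r • z = 0 := by
    intro r hr z
    have : r • 𝟙 (∐ F) = 0 := by
      apply Sigma.hom_ext
      intro m
      rw [Linear.comp_smul, Category.comp_id, comp_zero]
      apply ModuleCat.hom_ext
      refine LinearMap.ext fun y => ?_
      obtain ⟨y, rfl⟩ := Ideal.Quotient.mk_surjective y
      have : r • (Ideal.Quotient.mk I y) = 0 := by
        rw [← Ideal.Quotient.mk_eq_mk, ← Submodule.Quotient.mk_smul, Submodule.Quotient.mk_eq_zero]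
        exact I.mul_mem_right _ hr
      change r • (Sigma.ι F m (Ideal.Quotient.mk I y)) = 0
      rw [← map_smul]
      exact (congrArg _ this).trans (map_zero _)
    exact congrArg (fun f : (∐ F : ModuleCat.{u} R) ⟶ ∐ F => f z) this
  let K := ModuleCat.of R (LinearMap.ker φ.hom)
  let i : K ⟶ ∐ F := ModuleCat.ofHom (LinearMap.ker φ.hom).subtype
  have hi : i ≫ φ = 0 := by
    apply ModuleCat.hom_ext
    exact LinearMap.ext fun y => y.2
  have hS : (ShortComplex.mk i φ hi).ShortExact :=
    LinearMap.shortExact_shortComplexKer ((ModuleCat.epi_iff_surjective _).1 hφ)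
  obtain ⟨d, hd⟩ := ses_tri i φ hi hS n
  have hd2 := dtrot hd
  obtain ⟨e'⟩ := sg_shift (R := R) (n - 1) 1 K
  rw [sub_add_cancel] at e'
  refine ⟨_, _, _, _, _, tri_mid hd2 e, sg_coprod_mem hL _ _ fun _ => sg_mem hL h n,
    ⟨n - 1, K, ?_, ⟨e'.symm⟩⟩, ?_⟩
  · intro r hr m
    exact Subtype.ext (hF r hr m.1)
  · intro k x
    obtain ⟨y, hy⟩ := sg_ghost φ n k (x ≫ e.hom)
    rw [← Category.assoc, hy, Category.assoc, dtz12 hd2, comp_zero]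

lemma mod_killN {L : Set (DerivedCategory (ModuleCat.{u} R))} (hL : IsLocalizingSub.{u} L)
    (I : Ideal R) (h : smod R (ModuleCat.of R (R ⧸ I)) ∈ L) (n : ℤ) (N : ℕ) : ∀ (M : ModuleCat.{u} R)
    (_ : ∀ r ∈ I ^ N, ∀ m : M, r • m = 0), Q.obj ((sg R n).obj M) ∈ L := by
  induction N with
  | zero =>
    intro M hM
    apply hL.of_isZero
    have : Subsingleton M := ⟨fun a b => by
      have h1 := hM 1 (by simp)
      simp only [one_smul] at h1
      rw [h1 a, h1 b]⟩
    exact (Q (C := ModuleCat.{u} R)).map_isZero ((sg R n).map_isZero (ModuleCat.isZero_of_subsingleton M))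
  | succ N ih =>
    intro M hM
    let W : Submodule R M := I • ⊤
    let f : ModuleCat.of R W ⟶ M := ModuleCat.ofHom W.subtype
    let g : M ⟶ ModuleCat.of R (M ⧸ W) := ModuleCat.ofHom W.mkQ
    have w : f ≫ g = 0 := by
      apply ModuleCat.hom_ext
      exact LinearMap.ext fun y => (Submodule.Quotient.mk_eq_zero W).2 y.2
    have hS : (ShortComplex.mk f g w).ShortExact := by
      apply ModuleCat.shortComplex_shortExact
      · intro y
        change W.mkQ y = 0 ↔ _
        rw [← LinearMap.mem_ker, Submodule.ker_mkQ]
        exact ⟨fun hy => ⟨⟨y, hy⟩, rfl⟩, by rintro ⟨z, rfl⟩; exact z.2⟩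
      · exact Subtype.val_injective
      · exact W.mkQ_surjective
    obtain ⟨d, hd⟩ := ses_tri f g w hS n
    refine hL.ext_mem _ hd (ih _ ?_) (mod_kill1 hL I h n _ ?_)
    · rintro r hr ⟨m, hm⟩
      apply Subtype.ext
      change r • m = 0
      induction hm using Submodule.smul_induction_on' with
      | smul a ha m hm =>
        rw [smul_smul]
        exact hM _ (by rw [pow_succ]; exact Ideal.mul_mem_mul hr ha) m
      | add x _ y _ hx hy => rw [smul_add, hx, hy, add_zero]
    · intro r hr m
      obtain ⟨m, rfl⟩ := W.mkQ_surjective m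
      rw [← map_smul]
      exact (Submodule.Quotient.mk_eq_zero W).2 (Submodule.smul_mem_smul hr trivial)

lemma homology_zero (K : CochainComplex (ModuleCat.{u} R) ℤ) (k : ℤ) :
    IsZero (K.homology k) ↔ ∀ x : Sc R k ⟶ Q.obj K, x = 0 := by
  constructor
  · intro h x
    obtain ⟨g, rfl⟩ := Sc_lift x
    refine (Sc_zero g).2 ?_
    obtain ⟨c, hc⟩ := cyc_lift K k (el g) (el_cycle g)
    rw [← hc, ← hom_zero]
    exact (ModuleCat.subsingleton_of_isZero h).elim _ _
  · intro h
    have : Subsingleton (K.homology k) := by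
      refine subsingleton_of_forall_eq 0 fun ξ => ?_
      obtain ⟨c, rfl⟩ := hom_surj K k ξ
      rw [hom_zero]
      obtain ⟨g, hg⟩ := el_surj (K.iCycles k c) (cyc_d K k c)
      rw [← hg]
      exact (Sc_zero g).1 (h (Q.map g))
    exact ModuleCat.isZero_of_subsingleton _

lemma D_homology_zero (Y : DerivedCategory (ModuleCat.{u} R)) (k : ℤ) :
    IsZero ((homologyFunctor (ModuleCat.{u} R) k).obj Y) ↔ ∀ x : Sc R k ⟶ Y, x = 0 := by
  let e := Q.objObjPreimageIso Y
  let e2 := (homologyFunctor (ModuleCat.{u} R) k).mapIso e.symm ≪≫ (homologyFunctorFactors _ k).app _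
  rw [e2.isZero_iff]
  refine (homology_zero (Q.objPreimage Y) k).trans ⟨fun h x => ?_, fun h x => ?_⟩
  · rw [← cancel_mono e.inv, h (x ≫ e.inv), zero_comp]
  · rw [← cancel_mono e.hom, h (x ≫ e.hom), zero_comp]

lemma smul_single {n : ℤ} {M : ModuleCat.{u} R} (r : R)
    (h : ∀ x : Sc R n ⟶ Q.obj ((sg R n).obj M), r • x = 0) (m : M) : r • m = 0 := by
  let f : ModuleCat.of R R ⟶ M := ModuleCat.ofHom (LinearMap.toSpanSingleton R M m)
  have h1 : r • (singleFunctor (ModuleCat.{u} R) n).map f = 0 := h _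
  rw [← Functor.map_smul] at h1
  have h2 : r • f = 0 := (singleFunctor (ModuleCat.{u} R) n).map_injective (by rw [h1, Functor.map_zero])
  have h3 := congrArg (fun f : ModuleCat.of R R ⟶ M => f (1 : R)) h2
  have h4 : r • ((1 : R) • m) = 0 := h3
  rwa [one_smul] at h4

lemma smod_tors (I : Ideal R) : smod R (ModuleCat.of R (R ⧸ I)) ∈ TorsSub (Sc R) I := by
  intro k x a ha
  refine ⟨1, ?_⟩
  have h : a • 𝟙 (ModuleCat.of R (R ⧸ I)) = 0 := by
    apply ModuleCat.hom_ext
    refine LinearMap.ext fun y => ?_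
    obtain ⟨y, rfl⟩ := Ideal.Quotient.mk_surjective y
    have : a • (Ideal.Quotient.mk I y) = 0 := by
      rw [← Ideal.Quotient.mk_eq_mk, ← Submodule.Quotient.mk_smul, Submodule.Quotient.mk_eq_zero]
      exact I.mul_mem_right _ ha
    exact this
  have h2 : a • 𝟙 (smod R (ModuleCat.of R (R ⧸ I))) = 0 := by
    have := congrArg (fun f => (singleFunctor (ModuleCat.{u} R) 0).map f) h
    rw [Functor.map_smul, Functor.map_zero, CategoryTheory.Functor.map_id] at this
    exact this
  rw [pow_one, ← Category.comp_id x, ← Linear.comp_smul, h2, comp_zero]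

lemma amp_mem {L : Set (DerivedCategory (ModuleCat.{u} R))} (hL : IsLocalizingSub.{u} L)
    (I : Ideal R) (h : smod R (ModuleCat.of R (R ⧸ I)) ∈ L) (N m : ℕ) :
    ∀ (a : ℤ) (Y : DerivedCategory (ModuleCat.{u} R))
    (_ : ∀ k, (k < a ∨ a + m ≤ k) → ∀ x : Sc R k ⟶ Y, x = 0)
    (_ : ∀ k (x : Sc R k ⟶ Y), ∀ r ∈ I ^ N, r • x = 0), Y ∈ L := by
  induction m with
  | zero =>
    intro a Y h1 _
    have h0 : ∀ k (x : Sc R k ⟶ Y), x = 0 := fun k x => h1 k (by simp; omega) x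
    have : IsIso (0 : Y ⟶ 0) := by
      apply Sc_isIso
      intro k
      refine ⟨fun x y _ => by rw [h0 k x, h0 k y], fun y => ⟨0, ?_⟩⟩
      exact (isZero_zero _).eq_of_tgt _ _
    exact hL.mem_of_iso (asIso (0 : Y ⟶ 0)).symm hL.zero_mem
  | succ m ih =>
    intro a Y h1 h2
    obtain ⟨X, Z, hX, hZ, f, g, d, hT⟩ := TStructure.t.exists_triangle Y a (a + 1) rfl
    have hX1 : X.IsLE a := ⟨hX⟩
    have hZ1 : Z.IsGE (a + 1) := ⟨hZ⟩
    have hX2 : ∀ k, a < k → ∀ x : Sc R k ⟶ X, x = 0 := fun k hk =>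
      (D_homology_zero X k).1 ((isLE_iff X a).1 hX1 k hk)
    have hZ2 : ∀ k, k < a + 1 → ∀ x : Sc R k ⟶ Z, x = 0 := fun k hk =>
      (D_homology_zero Z k).1 ((isGE_iff Z (a + 1)).1 hZ1 k hk)
    have hinj : ∀ k (x : Sc R k ⟶ X), x ≫ f = 0 → x = 0 := by
      intro k x hx
      by_cases hk : a < k
      · exact hX2 k hk x
      · obtain ⟨y, hy⟩ := dtco1 hT (x⟦(1 : ℤ)⟧') (by rw [← Functor.map_comp, hx, Functor.map_zero])
        obtain ⟨e⟩ := Sc_shift (R := R) (k - 1) 1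
        rw [sub_add_cancel] at e
        have h3 : y = 0 := by
          rw [← cancel_epi e.hom, hZ2 (k - 1) (by omega) (e.hom ≫ y), comp_zero]
        rw [h3, zero_comp] at hy
        exact (shiftFunctor _ (1 : ℤ)).map_injective (by rw [hy, Functor.map_zero])
    have hsurj : ∀ k, a < k → ∀ x : Sc R k ⟶ Z, ∃ y, x = y ≫ g := by
      intro k hk x
      apply dtco3 hT
      obtain ⟨e, y, hy⟩ := Sc_gen.unshift (x ≫ d)
      rw [hy, hX2 _ (by omega) y, Functor.map_zero, comp_zero]
    have hX3 : X.IsGE a := by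
      rw [isGE_iff]
      intro k hk
      rw [D_homology_zero]
      intro x
      exact hinj k x (h1 k (Or.inl hk) _)
    obtain ⟨M, ⟨e⟩⟩ : ∃ M : ModuleCat.{u} R, Nonempty (X ≅ Q.obj ((sg R a).obj M)) :=
      exists_iso_singleFunctor_obj_of_isGE_of_isLE X a
    have hXL : X ∈ L := by
      refine hL.mem_of_iso e.symm (mod_killN hL I h a N M ?_)
      intro r hr
      apply smul_single (n := a)
      intro x
      have h3 : r • (x ≫ e.inv) = 0 := by
        apply hinj
        rw [Linear.smul_comp]
        exact h2 _ _ r hr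
      rw [← Linear.smul_comp] at h3
      rw [← cancel_mono e.inv]
      exact h3.trans zero_comp.symm
    have hZL : Z ∈ L := by
      apply ih (a + 1) Z
      · rintro k (hk | hk) x
        · exact hZ2 k hk x
        · obtain ⟨y, rfl⟩ := hsurj k (by omega) x
          rw [h1 k (Or.inr (by push_cast; omega)) y, zero_comp]
      · intro k x r hr
        by_cases hk : a < k
        · obtain ⟨y, rfl⟩ := hsurj k hk x
          rw [← Linear.smul_comp, h2 _ _ r hr, zero_comp]
        · rw [hZ2 k (by omega) x, smul_zero]
    exact hL.ext_mem _ hT hXL hZL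

lemma loc_eq_tors (I : Ideal R) (hI : I.FG) :
    Loc.{u} {smod R (ModuleCat.of R (R ⧸ I))} = TorsSub (Sc R) I := by
  apply Set.Subset.antisymm
  · apply loc_subset (Sc_gen.tors_localizing I)
    rintro _ rfl
    exact smod_tors I
  · have hL := loc_isLocalizing.{u} {smod R (ModuleCat.of R (R ⧸ I))}
    have hm : smod R (ModuleCat.of R (R ⧸ I)) ∈ Loc.{u} {smod R (ModuleCat.of R (R ⧸ I))} :=
      subset_loc _ rfl
    refine Sc_gen.tors_subset I hI
      {Y | ∃ a b : ℤ, ∀ k, (k < a ∨ b < k) → ∀ x : Sc R k ⟶ Y, x = 0} ?_ ?_ hL ?_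
    · intro n
      refine ⟨n, n, ?_⟩
      have h1 : (Sc R n).IsGE n :=
        inferInstanceAs (((singleFunctor (ModuleCat.{u} R) n).obj (ModuleCat.of R R)).IsGE n)
      have h2 : (Sc R n).IsLE n :=
        inferInstanceAs (((singleFunctor (ModuleCat.{u} R) n).obj (ModuleCat.of R R)).IsLE n)
      rintro k (hk | hk)
      · exact (D_homology_zero _ k).1 ((isGE_iff _ n).1 h1 k hk)
      · exact (D_homology_zero _ k).1 ((isLE_iff _ n).1 h2 k hk)
    · rintro X Y Z f g d hT ⟨a, b, hX⟩ ⟨a', b', hY⟩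
      refine ⟨min (a - 1) a', max b b', fun k hk x => ?_⟩
      obtain ⟨y, rfl⟩ : ∃ y, x = y ≫ g := by
        apply dtco3 hT
        obtain ⟨e, y, hy⟩ := Sc_gen.unshift (x ≫ d)
        rw [hy, hX _ (by omega) y, Functor.map_zero, comp_zero]
      rw [hY k (by omega) y, zero_comp]
    · rintro K ⟨a, b, hK⟩ ⟨N, hN⟩
      refine amp_mem hL I hm N (b + 1 - a).toNat a K (fun k hk => hK k (by omega)) ?_
      intro k x r hr
      rw [← Category.comp_id x, ← Linear.comp_smul, hN r hr, comp_zero]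

end ModPart
/-- Theorem: for finitely generated ideals `I`, `J` of `R`,
`Loc(R/I) ∩ Loc(R/J) = Loc(R/(I + J))` in `D(R)`. -/
theorem loc_inter_loc_eq_loc_sup (R : Type u) [CommRing R]
    [HasDerivedCategory.{w'} (ModuleCat.{u} R)]
    (I J : Ideal R) (hI : I.FG) (hJ : J.FG) :
    Loc.{u} {smod R (ModuleCat.of R (R ⧸ I))} ∩
        Loc.{u} {smod R (ModuleCat.of R (R ⧸ J))} =
      Loc.{u} {smod R (ModuleCat.of R (R ⧸ (I + J)))} := by
  rw [loc_eq_tors I hI, loc_eq_tors J hJ, loc_eq_tors (I + J) (Submodule.FG.sup hI hJ), tors_sup]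
end

section
/- Let R be a commutative ring and f ∈ R. Then Loc(R/(f))^⊥ = Loc(R_f) in D(R). Moreover Loc(R_f) is the essential image of the functor D(R_f) → D(R) induced by restriction of scalars along the localization map R → R_f. -/
open CategoryTheory CategoryTheory.Limits CategoryTheory.Pretriangulated ZeroObject

universe w w' v u

namespace LocAux

section Abs

variable {T : Type u} [Category.{v} T]

/-- coproduct, as a proposition -/
def IsCopr {ι : Type w} {f : ι → T} {X : T} (inj : ∀ i, f i ⟶ X) : Prop :=
  ∀ (Y : T) (g : ∀ i, f i ⟶ Y), ∃! φ : X ⟶ Y, ∀ i, inj i ≫ φ = g i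

section
variable {ι : Type w} {f : ι → T} {X : T} {inj : ∀ i, f i ⟶ X}

lemma IsCopr.hom_ext (h : IsCopr inj) {Y : T} {a b : X ⟶ Y}
    (hab : ∀ i, inj i ≫ a = inj i ≫ b) : a = b :=
  (h Y (fun i => inj i ≫ b)).unique hab (fun _ => rfl)

lemma IsCopr.exists_desc (h : IsCopr inj) {Y : T} (g : ∀ i, f i ⟶ Y) :
    ∃ φ : X ⟶ Y, ∀ i, inj i ≫ φ = g i := (h Y g).exists

lemma IsCopr.nonempty_isColimit (h : IsCopr inj) : Nonempty (IsColimit (Cofan.mk X inj)) :=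
  ⟨Cofan.IsColimit.mk _ (fun s => (h.exists_desc s.inj).choose)
    (fun s i => (h.exists_desc s.inj).choose_spec i)
    (fun s _ hm => h.hom_ext (fun i => (hm i).trans ((h.exists_desc s.inj).choose_spec i).symm))⟩

lemma IsCopr.of_isColimit {c : Cofan f} (hc : IsColimit c) : IsCopr c.inj := fun Y g =>
  ⟨Cofan.IsColimit.desc hc g, fun i => Cofan.IsColimit.fac hc g i,
    fun φ hφ => Cofan.IsColimit.hom_ext hc _ _ (fun i => by
      rw [Cofan.IsColimit.fac]; exact hφ i)⟩

lemma IsCopr.map_equiv {T' : Type*} [Category* T'] (h : IsCopr inj) (F : T ⥤ T')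
    [F.IsEquivalence] : IsCopr (fun i => F.map (inj i)) := by
  intro Y g
  obtain ⟨φ, hφ⟩ := h.exists_desc (fun i => F.preimage (g i ≫ (F.objObjPreimageIso Y).inv))
  refine ⟨F.map φ ≫ (F.objObjPreimageIso Y).hom, fun i => ?_, fun ψ hψ => ?_⟩
  · dsimp only
    rw [← Category.assoc, ← F.map_comp, hφ]
    simp
  · rw [← cancel_mono (F.objObjPreimageIso Y).inv]
    have : F.preimage (ψ ≫ (F.objObjPreimageIso Y).inv) = φ := h.hom_ext (fun i => by
      apply F.map_injective
      rw [hφ]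
      simp [← reassoc_of% (hψ i)])
    rw [← this]
    simp
end

variable [Preadditive T] [HasZeroObject T]
  [HasShift T ℤ] [∀ n : ℤ, (shiftFunctor T n).Additive] [Pretriangulated T]

section
variable {L : Set T} (hL : IsLocalizingSub.{w} L)
include hL

lemma loc_copr {ι : Type w} {f : ι → T} {X : T} {inj : ∀ i, f i ⟶ X} (h : IsCopr inj)
    (hf : ∀ i, f i ∈ L) : X ∈ L :=
  hL.coprod_mem f (Cofan.mk X inj) h.nonempty_isColimit.some hf

lemma loc_of_shift {x : T} (n : ℤ) (h : x⟦n⟧ ∈ L) : x ∈ L :=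
  hL.mem_of_iso ((shiftEquiv T n).unitIso.app x).symm (hL.shift_mem (-n) h)

lemma loc₁ (Tr : Triangle T) (h : Tr ∈ distinguishedTriangles) (h2 : Tr.obj₂ ∈ L)
    (h3 : Tr.obj₃ ∈ L) : Tr.obj₁ ∈ L :=
  loc_of_shift hL 1 (hL.cone_mem _ (rot_of_distTriang _ h) h2 h3)

lemma loc₂ (Tr : Triangle T) (h : Tr ∈ distinguishedTriangles) (h1 : Tr.obj₁ ∈ L)
    (h3 : Tr.obj₃ ∈ L) : Tr.obj₂ ∈ L :=
  hL.cone_mem _ (inv_rot_of_distTriang _ h) (hL.shift_mem _ h3) h1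

end

/-- the cone of `f` lies in `L` -/
def ConeIn (L : Set T) {x y : T} (f : x ⟶ y) : Prop :=
  ∃ (z : T) (g : y ⟶ z) (h : z ⟶ x⟦(1 : ℤ)⟧),
    Triangle.mk f g h ∈ (distinguishedTriangles : Set (Triangle T)) ∧ z ∈ L

section
variable {L : Set T} (hL : IsLocalizingSub.{w} L)
include hL

lemma coneIn_all {x y : T} {f : x ⟶ y} (hf : ConeIn L f) {z : T} {g : y ⟶ z}
    {h : z ⟶ x⟦(1 : ℤ)⟧}
    (hT : Triangle.mk f g h ∈ (distinguishedTriangles : Set (Triangle T))) : z ∈ L := by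
  obtain ⟨z', g', h', hT', hz'⟩ := hf
  refine hL.mem_of_iso (Triangle.π₃.mapIso (isoTriangleOfIso₁₂ _ _ hT' hT
    (Iso.refl _) (Iso.refl _) ?_)) hz'
  exact (Category.comp_id _).trans (Category.id_comp _).symm

lemma coneIn_of_isIso {x y : T} (f : x ⟶ y) [IsIso f] : ConeIn L f :=
  ⟨0, 0, 0, isomorphic_distinguished _ (contractible_distinguished x) _
    (Triangle.isoMk _ _ (Iso.refl _) (asIso f).symm (Iso.refl _)
      ((IsIso.hom_inv_id f).trans (Category.id_comp (𝟙 x)).symm)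
      (zero_comp.trans comp_zero.symm) (zero_comp.trans comp_zero.symm)), hL.zero_mem⟩

variable [IsTriangulated T]

lemma coneIn_comp {x y z : T} {f : x ⟶ y} {g : y ⟶ z} (hf : ConeIn L f) (hg : ConeIn L g) :
    ConeIn L (f ≫ g) := by
  obtain ⟨a, a1, a2, ha, ha'⟩ := hf
  obtain ⟨b, b1, b2, hb, hb'⟩ := hg
  obtain ⟨c, c1, c2, hc⟩ := distinguished_cocone_triangle (f ≫ g)
  exact ⟨c, c1, c2, hc, loc₂ hL _ (Triangulated.someOctahedron rfl ha hb hc).mem ha' hb'⟩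

lemma coneIn_left {x y z : T} {f : x ⟶ y} {g : y ⟶ z} (hfg : ConeIn L (f ≫ g))
    (hg : ConeIn L g) : ConeIn L f := by
  obtain ⟨a, a1, a2, ha⟩ := distinguished_cocone_triangle f
  obtain ⟨b, b1, b2, hb, hb'⟩ := hg
  obtain ⟨c, c1, c2, hc, hc'⟩ := hfg
  exact ⟨a, a1, a2, ha, loc₁ hL _ (Triangulated.someOctahedron rfl ha hb hc).mem hc' hb'⟩

end

lemma copr_cone {ι : Type w} (Tr : ι → Triangle T) (hTr : ∀ i, Tr i ∈ distinguishedTriangles)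
    {A B Z : T} {inA : ∀ i, (Tr i).obj₁ ⟶ A} {inB : ∀ i, (Tr i).obj₂ ⟶ B}
    (hA : IsCopr inA) (hB : IsCopr inB) {F : A ⟶ B} {G : B ⟶ Z} {H : Z ⟶ A⟦(1 : ℤ)⟧}
    (hT : Triangle.mk F G H ∈ (distinguishedTriangles : Set (Triangle T)))
    (hF : ∀ i, inA i ≫ F = (Tr i).mor₁ ≫ inB i) :
    ∃ φ : ∀ i, (Tr i).obj₃ ⟶ Z, IsCopr φ := by
  have hφ : ∀ i, ∃ φ : (Tr i).obj₃ ⟶ Z, (Tr i).mor₂ ≫ φ = inB i ≫ G ∧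
      (Tr i).mor₃ ≫ (inA i)⟦(1 : ℤ)⟧' = φ ≫ H := fun i =>
    complete_distinguished_triangle_morphism _ _ (hTr i) hT (inA i) (inB i) (hF i).symm
  choose φ hφ1 hφ2 using hφ
  have hA' := hA.map_equiv (shiftFunctor T (1 : ℤ))
  have hB' := hB.map_equiv (shiftFunctor T (1 : ℤ))
  have z12 : F ≫ G = 0 := comp_distTriang_mor_zero₁₂ _ hT
  have z31 : H ≫ F⟦(1 : ℤ)⟧' = 0 := comp_distTriang_mor_zero₃₁ _ hT
  have uniq : ∀ {W : T} (ψ : Z ⟶ W), (∀ i, φ i ≫ ψ = 0) → ψ = 0 := by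
    intro W ψ hψ
    have h1 : G ≫ ψ = 0 := hB.hom_ext (fun i => by
      rw [comp_zero, ← Category.assoc, ← hφ1, Category.assoc, hψ, comp_zero])
    obtain ⟨χ, hχ⟩ : ∃ χ : A⟦(1 : ℤ)⟧ ⟶ W, ψ = H ≫ χ := Triangle.yoneda_exact₃ _ hT ψ h1
    have h2 : ∀ i, ∃ θ : (Tr i).obj₂⟦(1 : ℤ)⟧ ⟶ W,
        (inA i)⟦(1 : ℤ)⟧' ≫ χ = (Tr i).mor₁⟦(1 : ℤ)⟧' ≫ θ := by
      intro i
      obtain ⟨θ, hθ⟩ := Triangle.yoneda_exact₃ _ (rot_of_distTriang _ (hTr i))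
        ((inA i)⟦(1 : ℤ)⟧' ≫ χ) (by
          change (Tr i).mor₃ ≫ (inA i)⟦(1 : ℤ)⟧' ≫ χ = 0
          rw [← Category.assoc, hφ2, Category.assoc, ← hχ, hψ])
      exact ⟨-θ, hθ.trans ((Preadditive.neg_comp _ _).trans (Preadditive.comp_neg _ _).symm)⟩
    choose θ hθ using h2
    obtain ⟨Θ, hΘ⟩ := hB'.exists_desc θ
    have h3 : χ = F⟦(1 : ℤ)⟧' ≫ Θ := hA'.hom_ext (fun i => by
      rw [hθ, ← Category.assoc, ← Functor.map_comp, hF, Functor.map_comp, Category.assoc, hΘ])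
    rw [hχ, h3, ← Category.assoc, z31, zero_comp]
  refine ⟨φ, fun W w => ?_⟩
  obtain ⟨β, hβ⟩ := hB.exists_desc (fun i => (Tr i).mor₂ ≫ w i)
  have h1 : F ≫ β = 0 := hA.hom_ext (fun i => by
    rw [comp_zero, ← Category.assoc, hF, Category.assoc, hβ, ← Category.assoc,
      comp_distTriang_mor_zero₁₂ _ (hTr i), zero_comp])
  obtain ⟨ψ, hψ⟩ : ∃ ψ : Z ⟶ W, β = G ≫ ψ := Triangle.yoneda_exact₂ _ hT β h1
  have h2 : ∀ i, ∃ χ : (Tr i).obj₁⟦(1 : ℤ)⟧ ⟶ W, φ i ≫ ψ - w i = (Tr i).mor₃ ≫ χ := fun i =>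
    Triangle.yoneda_exact₃ _ (hTr i) _ (by
      rw [Preadditive.comp_sub, ← Category.assoc, hφ1, Category.assoc, ← hψ, hβ, sub_self])
  choose χ hχ using h2
  obtain ⟨X, hX⟩ := hA'.exists_desc χ
  have h3 : ∀ i, φ i ≫ (ψ - H ≫ X) = w i := fun i => by
    rw [Preadditive.comp_sub, ← Category.assoc, ← hφ2, Category.assoc, hX, ← hχ]
    abel
  refine ⟨ψ - H ≫ X, h3, fun ψ' hψ' => ?_⟩
  rw [← sub_eq_zero]
  apply uniq
  intro i
  rw [Preadditive.comp_sub, h3, hψ', sub_self]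

lemma coneIn_copr {L : Set T} (hL : IsLocalizingSub.{w} L) {ι : Type w} {a b : ι → T}
    (f : ∀ i, a i ⟶ b i) (hf : ∀ i, ConeIn L (f i))
    {A B : T} {inA : ∀ i, a i ⟶ A} {inB : ∀ i, b i ⟶ B}
    (hA : IsCopr inA) (hB : IsCopr inB) {F : A ⟶ B}
    (hF : ∀ i, inA i ≫ F = f i ≫ inB i) : ConeIn L F := by
  choose z g h hT hz using hf
  obtain ⟨Z, G, H, hZ⟩ := distinguished_cocone_triangle F
  obtain ⟨φ, hφ⟩ := copr_cone (fun i => Triangle.mk (f i) (g i) (h i)) hT hA hB hZ hF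
  exact ⟨Z, G, H, hZ, loc_copr hL hφ hz⟩

end Abs

end LocAux

namespace LocAux

section Tel

variable {T : Type u} [Category.{v} T]

/-- iterated composition -/
def iter {x : ℕ → T} (s : ∀ n, x n ⟶ x (n + 1)) : ∀ n, x 0 ⟶ x n
  | 0 => 𝟙 _
  | n + 1 => iter s n ≫ s n

variable [Preadditive T] [HasZeroObject T]
  [HasShift T ℤ] [∀ n : ℤ, (shiftFunctor T n).Additive] [Pretriangulated T] [IsTriangulated T]

lemma coneIn_iter {L : Set T} (hL : IsLocalizingSub.{w} L) {x : ℕ → T}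
    (s : ∀ n, x n ⟶ x (n + 1)) (hs : ∀ n, ConeIn L (s n)) : ∀ n, ConeIn L (iter s n)
  | 0 => coneIn_of_isIso hL (𝟙 (x 0))
  | n + 1 => coneIn_comp hL (coneIn_iter hL s hs n) (hs n)

lemma telescope {L : Set T} (hL : IsLocalizingSub.{w} L) {x : ℕ → T}
    (s : ∀ n, x n ⟶ x (n + 1)) (hs : ∀ n, ConeIn L (s n)) {X S : T}
    {inX : ∀ n : ULift.{w} ℕ, x n.down ⟶ X} (hX : IsCopr inX)
    {inS : ∀ _ : ULift.{w} ℕ, x 0 ⟶ S} (hS : IsCopr inS) (sX : X ⟶ X)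
    (hsX : ∀ n, inX ⟨n⟩ ≫ sX = s n ≫ inX ⟨n + 1⟩) [IsIso (𝟙 X - sX)] : x 0 ∈ L := by
  obtain ⟨g, hg⟩ := hS.exists_desc (fun n => iter s n.down ≫ inX n)
  have hg' : ConeIn L g := coneIn_copr hL (fun n : ULift.{w} ℕ => iter s n.down)
    (fun n => coneIn_iter hL s hs _) hS hX hg
  obtain ⟨σ, hσ⟩ := hS.exists_desc (fun n => inS ⟨n.down + 1⟩)
  have hcomm : g ≫ (𝟙 X - sX) = (𝟙 S - σ) ≫ g := hS.hom_ext (fun n => by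
    rw [← Category.assoc, hg]
    simp only [Preadditive.comp_sub, Preadditive.sub_comp, Category.comp_id, Category.id_comp,
      Category.assoc]
    rw [reassoc_of% hσ n, hg, hg]
    congr 1
    exact (congrArg (iter s n.down ≫ ·) (hsX n.down)).trans (Category.assoc _ _ _).symm)
  have h1 : ConeIn L ((𝟙 S - σ) ≫ g) := by
    rw [← hcomm]
    exact coneIn_comp hL hg' (coneIn_of_isIso hL _)
  obtain ⟨Z, q, δ, hZ, hZL⟩ := coneIn_left hL h1 hg'
  obtain ⟨p, hp⟩ := hS.exists_desc (fun _ => 𝟙 (x 0))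
  have hp' : (𝟙 S - σ) ≫ p = 0 := hS.hom_ext (fun n => by
    simp only [Preadditive.comp_sub, Preadditive.sub_comp, Category.id_comp, comp_zero]
    rw [reassoc_of% hσ n, hp, hp, sub_self])
  have hq' : (𝟙 S - σ) ≫ q = 0 := comp_distTriang_mor_zero₁₂ _ hZ
  obtain ⟨r, hr⟩ : ∃ r : Z ⟶ x 0, p = q ≫ r := Triangle.yoneda_exact₂ _ hZ p hp'
  obtain ⟨ρ, hρ⟩ := hS.exists_desc (fun n => - ∑ k ∈ Finset.range n.down, inS ⟨k⟩)
  have hρ' : (𝟙 S - σ) ≫ ρ = 𝟙 S := hS.hom_ext (fun n => by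
    simp only [Preadditive.comp_sub, Preadditive.sub_comp, Category.id_comp, Category.comp_id]
    rw [reassoc_of% hσ n, hρ, hρ]
    simp only [Finset.sum_range_succ]
    abel)
  have hδ : δ = 0 := by
    have h0 : δ ≫ (𝟙 S - σ)⟦(1 : ℤ)⟧' = 0 := comp_distTriang_mor_zero₃₁ _ hZ
    calc δ = δ ≫ ((𝟙 S - σ) ≫ ρ)⟦(1 : ℤ)⟧' := by
            rw [hρ', CategoryTheory.Functor.map_id, Category.comp_id]
      _ = 0 := by rw [Functor.map_comp, ← Category.assoc, h0, zero_comp]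
  have hqe : ∀ {W : T} (a : Z ⟶ W), q ≫ a = 0 → a = 0 := fun a ha => by
    obtain ⟨b, hb⟩ : ∃ b, a = δ ≫ b := Triangle.yoneda_exact₃ _ hZ a ha
    rw [hb, hδ, zero_comp]
  have hin : ∀ n : ℕ, inS ⟨n⟩ ≫ q = inS ⟨0⟩ ≫ q := by
    intro n
    induction n with
    | zero => rfl
    | succ n ih =>
      have := congrArg (inS ⟨n⟩ ≫ ·) hq'
      simp only [Preadditive.comp_sub, Preadditive.sub_comp, Category.id_comp, comp_zero] at this
      rw [reassoc_of% hσ ⟨n⟩, sub_eq_zero] at this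
      exact this.symm.trans ih
  refine hL.mem_of_iso (x := Z) ⟨r, inS ⟨0⟩ ≫ q, ?_, ?_⟩ hZL
  · rw [← sub_eq_zero]
    apply hqe
    rw [Preadditive.comp_sub, ← Category.assoc, ← hr, Category.comp_id, sub_eq_zero]
    refine hS.hom_ext (fun n => ?_)
    rw [← Category.assoc, hp, Category.id_comp]
    exact (hin n.down).symm
  · rw [Category.assoc, ← hr, hp]

end Tel

end LocAux

namespace LocAux

section Cop

variable {B : Type u} [CommRing B] {ι : Type u} [DecidableEq ι] (K : ι → CochainComplex (ModuleCat.{u} B) ℤ)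

lemma elt_X (n : ℤ) (x : (∐ K).X n) :
    ∃ s : Finset ι, x = ∑ i ∈ s, ((Sigma.ι K i).f n) (((Sigma.π K i).f n) x) := by
  let N : ι → Submodule B ((∐ K).X n) := fun i => LinearMap.range ((Sigma.ι K i).f n).hom
  have hN : (⨆ i, N i) = ⊤ := by
    have h0 : ModuleCat.ofHom (⨆ i, N i).mkQ = 0 := by
      let hc := isColimitOfPreserves (HomologicalComplex.eval (ModuleCat.{u} B) (ComplexShape.up ℤ) n)
        (colimit.isColimit (Discrete.functor K))
      refine hc.hom_ext (fun ⟨i⟩ => ?_)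
      refine Eq.trans ?_ comp_zero.symm
      ext y
      change (⨆ i, N i).mkQ (((Sigma.ι K i).f n).hom y) = 0
      rw [← LinearMap.mem_ker, Submodule.ker_mkQ]
      exact Submodule.mem_iSup_of_mem i ⟨y, rfl⟩
    rw [← Submodule.ker_mkQ (⨆ i, N i)]
    have := congrArg ModuleCat.Hom.hom h0
    rw [ModuleCat.hom_ofHom] at this
    rw [this]
    exact LinearMap.ker_zero
  have hx : x ∈ ⨆ i, N i := hN ▸ Submodule.mem_top
  obtain ⟨s, hs⟩ := Submodule.mem_iSup_iff_exists_finset.1 hx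
  refine ⟨s, ?_⟩
  have key : ∀ i ∈ s, ∀ y : (∐ K).X n, y ∈ N i →
      y = ∑ i ∈ s, ((Sigma.ι K i).f n) (((Sigma.π K i).f n) y) := by
    rintro i hi _ ⟨y, rfl⟩
    have h1 : ∀ j, ((Sigma.π K j).f n) ((Sigma.ι K i).f n y) =
      ((Sigma.ι K i ≫ Sigma.π K j).f n) y := fun j => rfl
    rw [Finset.sum_eq_single i]
    · change _ = (Sigma.ι K i).f n (((Sigma.π K i).f n) ((Sigma.ι K i).f n y))
      rw [h1, Sigma.ι_π_eq_id]
      rfl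
    · intro j _ hj
      change (Sigma.ι K j).f n (((Sigma.π K j).f n) ((Sigma.ι K i).f n y)) = 0
      rw [h1, Sigma.ι_π_of_ne K hj.symm, HomologicalComplex.zero_f]
      exact map_zero ((Sigma.ι K j).f n).hom
    · exact fun h => (h hi).elim
  let P : (∐ K).X n →ₗ[B] (∐ K).X n :=
    LinearMap.id - ∑ i ∈ s, ((Sigma.ι K i).f n).hom ∘ₗ ((Sigma.π K i).f n).hom
  have hP : ∀ y, P y = y - ∑ i ∈ s, ((Sigma.ι K i).f n) (((Sigma.π K i).f n) y) := by
    intro y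
    simp [P]
  have : (⨆ i ∈ s, N i) ≤ LinearMap.ker P := iSup₂_le (fun i hi y hy => by
    rw [LinearMap.mem_ker, hP, sub_eq_zero]
    exact key i hi y hy)
  have := this hs
  rwa [LinearMap.mem_ker, hP, sub_eq_zero] at this

lemma elt_cycles (n : ℤ) (x : (∐ K).cycles n) :
    ∃ s : Finset ι, x = ∑ i ∈ s, (HomologicalComplex.cyclesMap (Sigma.ι K i) n)
      ((HomologicalComplex.cyclesMap (Sigma.π K i) n) x) := by
  obtain ⟨s, hs⟩ := elt_X K n ((∐ K).iCycles n x)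
  refine ⟨s, (ModuleCat.mono_iff_injective ((∐ K).iCycles n)).1 inferInstance ?_⟩
  rw [hs]
  simp only [map_sum, ← ModuleCat.comp_apply, Category.assoc,
    HomologicalComplex.cyclesMap_i, HomologicalComplex.cyclesMap_i_assoc]

lemma elt_homology (n : ℤ) (x : (∐ K).homology n) :
    ∃ s : Finset ι, x = ∑ i ∈ s, (HomologicalComplex.homologyMap (Sigma.ι K i) n)
      ((HomologicalComplex.homologyMap (Sigma.π K i) n) x) := by
  obtain ⟨z, rfl⟩ := (ModuleCat.epi_iff_surjective ((∐ K).homologyπ n)).1 inferInstance x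
  obtain ⟨s, hs⟩ := elt_cycles K n z
  refine ⟨s, ?_⟩
  conv_lhs => rw [hs]
  simp only [map_sum, ← ModuleCat.comp_apply, Category.assoc,
    HomologicalComplex.homologyπ_naturality, HomologicalComplex.homologyπ_naturality_assoc]

omit [DecidableEq ι] in
lemma quasiIso_copr {K K' : ι → CochainComplex (ModuleCat.{u} B) ℤ} (t : ∀ i, K i ⟶ K' i)
    (ht : ∀ i, QuasiIso (t i)) : QuasiIso (Limits.Sigma.map t) := by
  classical
  rw [quasiIso_iff]
  intro n
  rw [quasiIsoAt_iff_isIso_homologyMap]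
  have ht' : ∀ i, Function.Bijective (HomologicalComplex.homologyMap (t i) n) := fun i => by
    have := ht i
    rw [← ConcreteCategory.isIso_iff_bijective]
    infer_instance
  rw [ConcreteCategory.isIso_iff_bijective]
  have c1 : ∀ i, HomologicalComplex.homologyMap (Sigma.ι K i) n ≫
      HomologicalComplex.homologyMap (Limits.Sigma.map t) n =
      HomologicalComplex.homologyMap (t i) n ≫
        HomologicalComplex.homologyMap (Sigma.ι K' i) n := fun i => by
    rw [← HomologicalComplex.homologyMap_comp, ← HomologicalComplex.homologyMap_comp]
    simp
  have c2 : ∀ i, HomologicalComplex.homologyMap (Limits.Sigma.map t) n ≫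
      HomologicalComplex.homologyMap (Sigma.π K' i) n =
      HomologicalComplex.homologyMap (Sigma.π K i) n ≫
        HomologicalComplex.homologyMap (t i) n := fun i => by
    rw [← HomologicalComplex.homologyMap_comp, ← HomologicalComplex.homologyMap_comp]
    congr 1
    refine Sigma.hom_ext _ _ (fun j => ?_)
    by_cases h : j = i
    · subst h
      simp
    · simp [Sigma.ι_π_of_ne_assoc _ h, Sigma.ι_π_of_ne _ h]
  constructor
  · rw [injective_iff_map_eq_zero]
    intro x hx
    obtain ⟨s, hs⟩ := elt_homology K n x
    rw [hs]
    refine Finset.sum_eq_zero (fun i _ => ?_)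
    have : HomologicalComplex.homologyMap (Sigma.π K i) n x = 0 := by
      apply (ht' i).1
      rw [← ModuleCat.comp_apply, ← c2, ModuleCat.comp_apply, hx, map_zero, map_zero]
    rw [this, map_zero]
  · intro y
    obtain ⟨s, hs⟩ := elt_homology K' n y
    choose z hz using fun i => (ht' i).2 (HomologicalComplex.homologyMap (Sigma.π K' i) n y)
    refine ⟨∑ i ∈ s, HomologicalComplex.homologyMap (Sigma.ι K i) n (z i), ?_⟩
    conv_rhs => rw [hs]
    simp only [map_sum, ← hz, ← ModuleCat.comp_apply, c1]

omit [DecidableEq ι] in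
lemma homology_copr_ext {K : ι → CochainComplex (ModuleCat.{u} B) ℤ} (n : ℤ)
    {N : ModuleCat.{u} B} (g : (∐ K).homology n ⟶ N)
    (hg : ∀ i, HomologicalComplex.homologyMap (Sigma.ι K i) n ≫ g = 0) : g = 0 := by
  classical
  ext x
  obtain ⟨s, hs⟩ := elt_homology K n x
  change g x = 0
  rw [hs]
  simp only [map_sum]
  refine Finset.sum_eq_zero (fun i _ => ?_)
  rw [← ModuleCat.comp_apply, hg]
  rfl

end Cop

section CopD

variable {B : Type u} [CommRing B] [HasDerivedCategory.{w'} (ModuleCat.{u} B)]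
  {ι : Type u} (K : ι → CochainComplex (ModuleCat.{u} B) ℤ)

open DerivedCategory

lemma exists_factor {K M : CochainComplex (ModuleCat.{u} B) ℤ} (a : K ⟶ M) (ha : Q.map a = 0) :
    ∃ (W A : CochainComplex (ModuleCat.{u} B) ℤ) (t : W ⟶ K) (j : W ⟶ A) (b : A ⟶ M),
      QuasiIso t ∧ QuasiIso (0 : A ⟶ A) ∧ t ≫ a = j ≫ b := by
  have h1 : Qh.map ((HomotopyCategory.quotient _ _).map a) =
      Qh.map ((HomotopyCategory.quotient _ _).map 0) := by
    rw [← cancel_mono ((quotientCompQhIso (ModuleCat.{u} B)).hom.app M),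
      quotientCompQhIso_hom_naturality, quotientCompQhIso_hom_naturality, ha, Functor.map_zero]
  rw [MorphismProperty.map_eq_iff_precomp Qh
    (HomotopyCategory.quasiIso (ModuleCat.{u} B) (ComplexShape.up ℤ))] at h1
  obtain ⟨W, s, hs, h⟩ := h1
  obtain ⟨W, rfl⟩ := HomotopyCategory.quotient_obj_surjective W
  obtain ⟨t, rfl⟩ := (HomotopyCategory.quotient _ _).map_surjective s
  have H : Homotopy (t ≫ a) 0 := HomotopyCategory.homotopyOfEq _ _ (by
    simpa using h)
  refine ⟨W, CochainComplex.mappingCone (𝟙 W), t, CochainComplex.mappingCone.inr _,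
    CochainComplex.mappingCone.desc _ (CochainComplex.HomComplex.Cochain.ofHomotopy H) (t ≫ a) ?_, ?_, ?_, ?_⟩
  · rw [CochainComplex.HomComplex.δ_ofHomotopy, Category.id_comp,
      CochainComplex.HomComplex.Cochain.ofHom_zero, sub_zero]
  · exact (HomologicalComplex.mem_quasiIso_iff _).1
      ((HomotopyCategory.quotient_map_mem_quasiIso_iff _).1 hs)
  · rw [← isIso_Q_map_iff_quasiIso (C := ModuleCat.{u} B),
      ← Q_map_eq_of_homotopy _ (CochainComplex.mappingCone.homotopyToZeroOfId W)]
    infer_instance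
  · simp

/-- `Q` preserves coproducts -/
lemma isCopr_Q_sigma : IsCopr (fun i => Q.map (Sigma.ι K i)) := by
  suffices H : ∀ (M : CochainComplex (ModuleCat.{u} B) ℤ) (g : ∀ i, Q.obj (K i) ⟶ Q.obj M),
      ∃! φ : Q.obj (∐ K) ⟶ Q.obj M, ∀ i, Q.map (Sigma.ι K i) ≫ φ = g i by
    intro Y g
    let e := Q.objObjPreimageIso Y
    obtain ⟨φ, hφ, hφ'⟩ := H _ (fun i => g i ≫ e.inv)
    refine ⟨φ ≫ e.hom, fun i => ?_, fun ψ hψ => ?_⟩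
    · dsimp only
      rw [← Category.assoc, hφ]
      simp
    · rw [← hφ' (ψ ≫ e.inv) (fun i => by rw [← Category.assoc, hψ])]
      simp
  intro M g
  have uniq : ∀ φ : Q.obj (∐ K) ⟶ Q.obj M, (∀ i, Q.map (Sigma.ι K i) ≫ φ = 0) → φ = 0 := by
    intro φ hφ
    obtain ⟨M', a, s, hs, rfl⟩ := left_fac φ
    have h0 : ∀ i, Q.map (Sigma.ι K i ≫ a) = 0 := fun i => by
      rw [← cancel_mono (inv (Q.map s)), Functor.map_comp, Category.assoc, hφ, zero_comp]
    choose W A t j b ht hA hb using fun i => exists_factor _ (h0 i)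
    have hC := quasiIso_copr (fun i => (0 : A i ⟶ A i)) hA
    have hT := quasiIso_copr t ht
    have e0 : Limits.Sigma.map (fun i => (0 : A i ⟶ A i)) = 0 := Sigma.hom_ext _ _ (by simp)
    rw [e0, ← isIso_Q_map_iff_quasiIso (C := ModuleCat.{u} B), Functor.map_zero] at hC
    have e1 : 𝟙 (Q.obj (∐ A)) = 0 := by
      rw [← IsIso.hom_inv_id (0 : Q.obj (∐ A) ⟶ Q.obj (∐ A)), zero_comp]
    have e2 : Limits.Sigma.map t ≫ a = Limits.Sigma.map j ≫ Sigma.desc b :=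
      Sigma.hom_ext _ _ (fun i => by
        rw [Sigma.ι_map_assoc, Sigma.ι_map_assoc, hb, Sigma.ι_desc])
    have e3 : Q.map a = 0 := by
      rw [← cancel_epi (Q.map (Limits.Sigma.map t)), ← Functor.map_comp, e2, Functor.map_comp,
        ← Category.comp_id (Q.map (Limits.Sigma.map j)), e1]
      simp
    rw [e3, zero_comp]
  choose W s hs a ha using fun i => right_fac (g i)
  have hS : QuasiIso (Limits.Sigma.map s) := quasiIso_copr s (fun i => by
    have := hs i
    exact (isIso_Q_map_iff_quasiIso (C := ModuleCat.{u} B) _).1 this)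
  have h3 : ∀ i, Q.map (Sigma.ι K i) ≫ inv (Q.map (Limits.Sigma.map s)) ≫ Q.map (Sigma.desc a) =
      g i := fun i => by
    have := hs i
    rw [ha, ← cancel_epi (Q.map (s i)), IsIso.hom_inv_id_assoc, ← Q.map_comp_assoc,
      ← Sigma.ι_map, Q.map_comp_assoc, IsIso.hom_inv_id_assoc, ← Q.map_comp, Sigma.ι_desc]
  refine ⟨_, h3, fun ψ hψ => ?_⟩
  rw [← sub_eq_zero]
  apply uniq
  intro i
  rw [Preadditive.comp_sub, h3, hψ, sub_self]

variable {K} in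
lemma isCopr_Q {X : CochainComplex (ModuleCat.{u} B) ℤ} {inj : ∀ i, K i ⟶ X} (h : IsCopr inj) :
    IsCopr (fun i => Q.map (inj i)) := by
  let e : ∐ K ≅ X := (colimit.isColimit (Discrete.functor K)).coconePointUniqueUpToIso
    h.nonempty_isColimit.some
  have he : ∀ i, Sigma.ι K i ≫ e.hom = inj i := fun i =>
    (colimit.isColimit (Discrete.functor K)).comp_coconePointUniqueUpToIso_hom
      h.nonempty_isColimit.some ⟨i⟩
  intro Y g
  obtain ⟨φ, hφ, hφ'⟩ := isCopr_Q_sigma K Y g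
  refine ⟨Q.map e.inv ≫ φ, fun i => ?_, fun ψ hψ => ?_⟩
  · dsimp only
    rw [← hφ, ← he]
    simp [← Q.map_comp_assoc]
  · rw [← hφ' (Q.map e.hom ≫ ψ) (fun i => by
      dsimp only
      rw [← Q.map_comp_assoc, he, hψ])]
    simp [← Q.map_comp_assoc]

variable (B) in
lemma exists_copr {ι : Type u} (x : ι → DerivedCategory (ModuleCat.{u} B)) :
    ∃ (X : DerivedCategory (ModuleCat.{u} B)) (inj : ∀ i, x i ⟶ X), IsCopr inj ∧
      ∀ (Y : DerivedCategory (ModuleCat.{u} B)) (g : X ⟶ Y) (n : ℤ),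
        (∀ i, (homologyFunctor _ n).map (inj i ≫ g) = 0) → (homologyFunctor _ n).map g = 0 := by
  let K : ι → CochainComplex (ModuleCat.{u} B) ℤ := fun i => Q.objPreimage (x i)
  let e : ∀ i, Q.obj (K i) ≅ x i := fun i => Q.objObjPreimageIso (x i)
  refine ⟨Q.obj (∐ K), fun i => (e i).inv ≫ Q.map (Sigma.ι K i), ?_, ?_⟩
  · intro Y g
    obtain ⟨φ, hφ, hφ'⟩ := isCopr_Q_sigma K Y (fun i => (e i).hom ≫ g i)
    refine ⟨φ, fun i => ?_, fun ψ hψ => hφ' _ (fun i => ?_)⟩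
    · dsimp only
      rw [Category.assoc, hφ, Iso.inv_hom_id_assoc]
    · rw [← hψ]
      simp
  · intro Y g n h
    rw [← cancel_epi ((homologyFunctorFactors (ModuleCat.{u} B) n).inv.app (∐ K)), comp_zero]
    refine homology_copr_ext n _ (fun i => ?_)
    have h1 := (homologyFunctorFactors (ModuleCat.{u} B) n).inv.naturality (Sigma.ι K i)
    have h2 : (homologyFunctor _ n).map (Q.map (Sigma.ι K i)) ≫ (homologyFunctor _ n).map g = 0 := by
      rw [← Functor.map_comp, ← cancel_epi ((homologyFunctor _ n).map (e i).inv), ← Functor.map_comp,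
        comp_zero, ← h i, Category.assoc]
    have h3 := congrArg (· ≫ (homologyFunctor _ n).map g) h1
    refine (Category.assoc _ _ _).symm.trans (h3.trans ?_)
    refine (Category.assoc _ _ _).trans ?_
    refine Eq.trans (congrArg (_ ≫ ·) h2) comp_zero

end CopD

end LocAux

namespace LocAux

section Gen

variable {B : Type u} [CommRing B] [HasDerivedCategory.{w'} (ModuleCat.{u} B)]

open DerivedCategory

lemma single_mem {L : Set (DerivedCategory (ModuleCat.{u} B))} (hL : IsLocalizingSub.{u} L)
    {M : ModuleCat.{u} B} (hM : smod B M ∈ L) (n : ℤ) :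
    Q.obj ((HomologicalComplex.single (ModuleCat.{u} B) (ComplexShape.up ℤ) n).obj M) ∈ L :=
  hL.mem_of_iso (((singleFunctors (ModuleCat.{u} B)).shiftIso (-n) n 0 (by simp)).app M)
    (hL.shift_mem (-n) hM)

lemma gen_step {L : Set (DerivedCategory (ModuleCat.{u} B))} (hL : IsLocalizingSub.{u} L)
    (hB : smod B (ModuleCat.of B B) ∈ L) (x : DerivedCategory (ModuleCat.{u} B)) :
    ∃ (x' : DerivedCategory (ModuleCat.{u} B)) (s : x ⟶ x'), ConeIn L s ∧
      ∀ n, (homologyFunctor (ModuleCat.{u} B) n).map s = 0 := by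
  let K : CochainComplex (ModuleCat.{u} B) ℤ := Q.objPreimage x
  let e : Q.obj K ≅ x := Q.objObjPreimageIso x
  let I : Type u := Σ n : ULift.{u} ℤ, (ModuleCat.of B B ⟶ K.cycles n.down)
  let S : I → CochainComplex (ModuleCat.{u} B) ℤ := fun i =>
    (HomologicalComplex.single (ModuleCat.{u} B) (ComplexShape.up ℤ) i.1.down).obj (ModuleCat.of B B)
  let m : ∀ i : I, S i ⟶ K := fun i =>
    HomologicalComplex.mkHomFromSingle (i.2 ≫ K.iCycles i.1.down) (fun k _ => by simp)
  obtain ⟨y, inj, hy, -⟩ := exists_copr B (fun i => Q.obj (S i))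
  obtain ⟨p, hp⟩ := hy.exists_desc (fun i => Q.map (m i) ≫ e.hom)
  obtain ⟨x', s, h, hT⟩ := distinguished_cocone_triangle p
  have hyL : y ∈ L := loc_copr hL hy (fun i => single_mem hL hB _)
  refine ⟨x', s, ⟨y⟦(1 : ℤ)⟧, h, _, rot_of_distTriang _ hT, hL.shift_mem _ hyL⟩, fun n => ?_⟩
  have hps : p ≫ s = 0 := comp_distTriang_mor_zero₁₂ _ hT
  obtain ⟨τ, hτ, hτ'⟩ : ∃ τ : ∀ K : CochainComplex (ModuleCat.{u} B) ℤ,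
      K.homology n ⟶ (homologyFunctor (ModuleCat.{u} B) n).obj (Q.obj K),
      (∀ K, IsIso (τ K)) ∧ ∀ {K K' : CochainComplex (ModuleCat.{u} B) ℤ} (φ : K ⟶ K'),
        HomologicalComplex.homologyMap φ n ≫ τ K' =
          τ K ≫ (homologyFunctor (ModuleCat.{u} B) n).map (Q.map φ) :=
    ⟨fun K => (homologyFunctorFactors (ModuleCat.{u} B) n).inv.app K,
      fun K => inferInstanceAs (IsIso ((homologyFunctorFactors (ModuleCat.{u} B) n).inv.app K)),
      fun φ => (homologyFunctorFactors (ModuleCat.{u} B) n).inv.naturality φ⟩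
  suffices H : τ K ≫ (homologyFunctor (ModuleCat.{u} B) n).map (e.hom ≫ s) = 0 by
    rw [← cancel_epi (τ K ≫ (homologyFunctor (ModuleCat.{u} B) n).map e.hom), comp_zero,
      Category.assoc, ← Functor.map_comp]
    exact H
  generalize hG : (homologyFunctor (ModuleCat.{u} B) n).map (e.hom ≫ s) = G
  have key : ∀ a : ModuleCat.of B B ⟶ K.cycles n, a ≫ K.homologyπ n ≫
      τ K ≫ G = 0 := by
    intro a
    let i : I := ⟨⟨n⟩, a⟩
    have h1 : Q.map (m i) ≫ e.hom ≫ s = 0 := by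
      rw [← Category.assoc, ← hp, Category.assoc, hps, comp_zero]
    have h2 : (HomologicalComplex.homologyMap (m i) n) ≫ τ K ≫ G = 0 := by
      rw [← Category.assoc, hτ', Category.assoc, ← hG, ← Functor.map_comp, h1, Functor.map_zero,
        comp_zero]
    let l : ModuleCat.of B B ⟶ (S i).cycles n := (S i).liftCycles
      (HomologicalComplex.singleObjXSelf (ComplexShape.up ℤ) n (ModuleCat.of B B)).inv _ rfl
      (by simp [S])
    have h4 : l ≫ HomologicalComplex.cyclesMap (m i) n = a := by
      rw [← cancel_mono (K.iCycles n)]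
      simp [l, m, i]
    rw [← h4, Category.assoc, ← HomologicalComplex.homologyπ_naturality_assoc, h2, comp_zero,
      comp_zero]
  ext h
  obtain ⟨z, rfl⟩ := (ModuleCat.epi_iff_surjective (K.homologyπ n)).1 inferInstance h
  have h5 := congrArg (fun φ => φ.hom (1 : B))
    (key (ModuleCat.ofHom (LinearMap.toSpanSingleton B _ z)))
  have h6 : (τ K ≫ G) (K.homologyπ n ((LinearMap.toSpanSingleton B _ z) (1 : B))) = 0 := h5
  rw [LinearMap.toSpanSingleton_apply, one_smul] at h6
  exact h6

lemma gen_mem {L : Set (DerivedCategory (ModuleCat.{u} B))} (hL : IsLocalizingSub.{u} L)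
    (hB : smod B (ModuleCat.of B B) ∈ L) (x : DerivedCategory (ModuleCat.{u} B)) : x ∈ L := by
  choose next step hstep hstep' using gen_step hL hB
  let X : ℕ → DerivedCategory (ModuleCat.{u} B) := fun n => Nat.rec x (fun _ y => next y) n
  let s : ∀ n, X n ⟶ X (n + 1) := fun n => step (X n)
  obtain ⟨P, inP, hP, hP'⟩ := exists_copr B (fun n : ULift.{u} ℕ => X n.down)
  obtain ⟨S, inS, hS, -⟩ := exists_copr B (fun _ : ULift.{u} ℕ => x)
  obtain ⟨sX, hsX⟩ := hP.exists_desc (fun n => s n.down ≫ inP ⟨n.down + 1⟩)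
  have h0 : ∀ n, (homologyFunctor (ModuleCat.{u} B) n).map sX = 0 := fun n => by
    refine hP' _ _ n (fun i => ?_)
    rw [hsX, Functor.map_comp, hstep', zero_comp]
  have : IsIso (𝟙 P - sX) := by
    rw [DerivedCategory.isIso_iff]
    intro n
    rw [Functor.map_sub, h0, sub_zero]
    infer_instance
  exact telescope hL s (fun n => hstep _) hP hS sX (fun n => hsX ⟨n⟩)

end Gen

end LocAux

namespace LocAux

section

lemma IsCopr.nonempty_iso {T : Type*} [Category* T] {ι : Type w} {f f' : ι → T} {X X' : T}
    {inj : ∀ i, f i ⟶ X} {inj' : ∀ i, f' i ⟶ X'} (h : IsCopr inj) (h' : IsCopr inj')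
    (e : ∀ i, f i ≅ f' i) : Nonempty (X ≅ X') := by
  obtain ⟨a, ha⟩ := h.exists_desc (fun i => (e i).hom ≫ inj' i)
  obtain ⟨b, hb⟩ := h'.exists_desc (fun i => (e i).inv ≫ inj i)
  exact ⟨⟨a, b, h.hom_ext (fun i => by simp [reassoc_of% ha i, hb]),
    h'.hom_ext (fun i => by simp [reassoc_of% hb i, ha])⟩⟩

lemma IsCopr.map_preserves {T T' : Type*} [Category* T] [Category* T'] {ι : Type w} {f : ι → T}
    {X : T} {inj : ∀ i, f i ⟶ X} (h : IsCopr inj) (G : T ⥤ T')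
    [PreservesColimitsOfShape (Discrete ι) G] : IsCopr (fun i => G.map (inj i)) :=
  IsCopr.of_isColimit (isColimitCofanMkObjOfIsColimit G f inj h.nonempty_isColimit.some)

end

section Pull

variable {R : Type u} [CommRing R] [HasDerivedCategory.{w'} (ModuleCat.{u} R)]

open DerivedCategory

/-- restriction of `B` to `R` -/
noncomputable def resSelfIso (R B : Type u) [CommRing R] [CommRing B] [Algebra R B] :
    ModuleCat.of R B ≅ (ModuleCat.restrictScalars.{u} (algebraMap R B)).obj (ModuleCat.of B B) :=
  (show B ≃ₗ[R] ((ModuleCat.restrictScalars.{u} (algebraMap R B)).obj (ModuleCat.of B B) :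
      ModuleCat.{u} R) from
    { AddEquiv.refl B with
      map_smul' := fun r x => Algebra.smul_def r x }).toModuleIso

lemma res_mem {L : Set (DerivedCategory (ModuleCat.{u} R))} (hL : IsLocalizingSub.{u} L)
    (B : Type u) [CommRing B] [Algebra R B] (hB : smod R (ModuleCat.of R B) ∈ L)
    (K : CochainComplex (ModuleCat.{u} B) ℤ) :
    Q.obj (((ModuleCat.restrictScalars.{u} (algebraMap R B)).mapHomologicalComplex
      (ComplexShape.up ℤ)).obj K) ∈ L := by
  let _ := HasDerivedCategory.standard (ModuleCat.{u} B)
  let F := ModuleCat.restrictScalars.{u} (algebraMap R B)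
  let θ := F.mapDerivedCategoryFactors
  have H : IsLocalizingSub.{u} {y | F.mapDerivedCategory.obj y ∈ L} := by
    refine ⟨?_, ?_, ?_, ?_, ?_⟩
    · exact hL.mem_of_iso F.mapDerivedCategory.mapZeroObject.symm hL.zero_mem
    · exact fun e h => hL.mem_of_iso (F.mapDerivedCategory.mapIso e) h
    · exact fun n x h => hL.mem_of_iso ((F.mapDerivedCategory.commShiftIso n).app x).symm
        (hL.shift_mem n h)
    · exact fun Tr hTr h1 h2 => hL.cone_mem _ (F.mapDerivedCategory.map_distinguished Tr hTr) h1 h2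
    · intro ι f c hc hf
      let K : ι → CochainComplex (ModuleCat.{u} B) ℤ := fun i => Q.objPreimage (f i)
      let e : ∀ i, Q.obj (K i) ≅ f i := fun i => Q.objObjPreimageIso (f i)
      obtain ⟨i1⟩ := (isCopr_Q_sigma K).nonempty_iso (IsCopr.of_isColimit hc) e
      have h1 : IsCopr (fun i => Sigma.ι K i) :=
        IsCopr.of_isColimit (colimit.isColimit (Discrete.functor K))
      have h2 := isCopr_Q (h1.map_preserves (F.mapHomologicalComplex (ComplexShape.up ℤ)))
      refine hL.mem_of_iso (F.mapDerivedCategory.mapIso i1) ?_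
      refine hL.mem_of_iso (θ.app (∐ K)).symm ?_
      refine loc_copr hL h2 (fun i => ?_)
      exact hL.mem_of_iso (θ.app (K i)) (hL.mem_of_iso (F.mapDerivedCategory.mapIso (e i).symm) (hf i))
  refine hL.mem_of_iso (θ.app K) (gen_mem H ?_ (Q.obj K))
  refine hL.mem_of_iso ((F.mapDerivedCategorySingleFunctor 0).app (ModuleCat.of B B)).symm ?_
  exact hL.mem_of_iso ((singleFunctor (ModuleCat.{u} R) 0).mapIso (resSelfIso R B)) hB

end Pull

end LocAux

namespace LocAux

section Abs2

variable {T : Type u} [Category.{v} T] [Preadditive T] [HasZeroObject T]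
  [HasShift T ℤ] [∀ n : ℤ, (shiftFunctor T n).Additive] [Pretriangulated T]

lemma isLoc_Loc (S : Set T) : IsLocalizingSub.{w} (Loc.{w} S) where
  zero_mem := fun _ hL => hL.1.zero_mem
  mem_of_iso := fun e hx L hL => hL.1.mem_of_iso e (hx L hL)
  shift_mem := fun n _ hx L hL => hL.1.shift_mem n (hx L hL)
  cone_mem := fun Tr hT h1 h2 L hL => hL.1.cone_mem Tr hT (h1 L hL) (h2 L hL)
  coprod_mem := fun f c hc h L hL => hL.1.coprod_mem f c hc (fun i => h i L hL)

lemma subset_Loc (S : Set T) : S ⊆ Loc.{w} S := fun _ hx _ hL => hL.2 hx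

lemma Loc_le {S L : Set T} (hL : IsLocalizingSub.{w} L) (h : S ⊆ L) : Loc.{w} S ⊆ L :=
  fun _ hx => hx L ⟨hL, h⟩

/-- left orthogonal of all shifts of `x` -/
def lOrth (x : T) : Set T := {c | ∀ (n : ℤ) (g : c ⟶ x⟦n⟧), g = 0}

lemma isLoc_lOrth (x : T) : IsLocalizingSub.{w} (lOrth x) := by
  have hs : ∀ (m : ℤ) {c : T}, c ∈ lOrth x → c⟦m⟧ ∈ lOrth x := by
    intro m c hc n g
    apply (shiftFunctor T (-m)).map_injective
    rw [Functor.map_zero]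
    have h := hc (n + -m) ((shiftShiftNeg c m).inv ≫ g⟦-m⟧' ≫ (shiftFunctorAdd T n (-m)).inv.app x)
    rw [← cancel_epi (shiftShiftNeg c m).inv,
      ← cancel_mono ((shiftFunctorAdd T n (-m)).inv.app x)]
    rw [Category.assoc]
    refine h.trans ?_
    symm
    refine (congrArg (· ≫ _) comp_zero).trans zero_comp
  refine ⟨?_, ?_, hs, ?_, ?_⟩
  · exact fun n g => (isZero_zero T).eq_of_src _ _
  · intro c c' e hc n g
    rw [← cancel_epi e.hom, hc n (e.hom ≫ g), comp_zero]
  · intro Tr hT h1 h2 n g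
    obtain ⟨a, ha⟩ : ∃ a : Tr.obj₁⟦(1 : ℤ)⟧ ⟶ x⟦n⟧, g = Tr.mor₃ ≫ a :=
      Triangle.yoneda_exact₃ _ hT g (h2 n _)
    rw [ha, hs 1 h1 n a, comp_zero]
  · intro ι f c hc h n g
    exact (IsCopr.of_isColimit hc).hom_ext (fun i => by rw [h i n (c.inj i ≫ g), comp_zero])

lemma lOrth_self {x : T} (h : x ∈ lOrth x) : IsZero x := by
  have h1 := h 0 ((shiftFunctorZero T ℤ).inv.app x)
  have h2 : 𝟙 x = 0 := by
    have := (shiftFunctorZero T ℤ).inv_hom_id_app x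
    rw [h1, zero_comp] at this
    exact this.symm
  exact (IsZero.iff_id_eq_zero x).2 h2

/-- the cone criterion: orthogonality of the cone gives bijectivity -/
lemma lOrth_bij {x c d : T} {a : c ⟶ d} (ha : ConeIn (lOrth x) a) (n : ℤ) :
    Function.Bijective (fun g : d ⟶ x⟦n⟧ => a ≫ g) := by
  obtain ⟨z, g, h, hT, hz⟩ := ha
  constructor
  · intro u v huv
    rw [← sub_eq_zero]
    have h1 : a ≫ (u - v) = 0 := by
      rw [Preadditive.comp_sub, sub_eq_zero]; exact huv
    obtain ⟨t, ht⟩ : ∃ t : z ⟶ x⟦n⟧, u - v = g ≫ t := Triangle.yoneda_exact₂ _ hT _ h1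
    rw [ht, hz n t, comp_zero]
  · intro u
    have hz' := (isLoc_lOrth.{0} x).shift_mem (-1) hz
    obtain ⟨t, ht⟩ : ∃ t : d ⟶ x⟦n⟧, u = a ≫ t :=
      Triangle.yoneda_exact₂ _ (inv_rot_of_distTriang _ hT) u (hz' n _)
    exact ⟨t, ht.symm⟩

variable {R : Type*} [CommRing R] [Linear R T] [∀ n : ℤ, (shiftFunctor T n).Linear R]

/-- objects on which `r` is invertible -/
def fLoc (T : Type u) [Category.{v} T] [Preadditive T] {R : Type*} [CommRing R] [Linear R T]
    (r : R) : Set T := {x | IsIso (r • 𝟙 x)}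

lemma isLoc_fLoc (r : R) : IsLocalizingSub.{w} (fLoc T r) := by
  refine ⟨?_, ?_, ?_, ?_, ?_⟩
  · exact ⟨0, (isZero_zero T).eq_of_src _ _, (isZero_zero T).eq_of_src _ _⟩
  · intro x y e (h : IsIso _)
    have : r • 𝟙 y = e.inv ≫ (r • 𝟙 x) ≫ e.hom := by simp
    change IsIso _
    rw [this]
    infer_instance
  · intro n x (h : IsIso _)
    have : r • 𝟙 (x⟦n⟧) = (r • 𝟙 x)⟦n⟧' := by
      rw [Functor.map_smul, CategoryTheory.Functor.map_id]
    change IsIso _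
    rw [this]
    infer_instance
  · intro Tr hT h1 h2
    let φ : Tr ⟶ Tr := Triangle.homMk _ _ (r • 𝟙 _) (r • 𝟙 _) (r • 𝟙 _) (by simp) (by simp)
      (by rw [Functor.map_smul, CategoryTheory.Functor.map_id]; simp)
    exact isIso₃_of_isIso₁₂ φ hT hT h1 h2
  · intro ι f c hc h
    have hC := IsCopr.of_isColimit hc
    have h' : ∀ i, ∃ s : f i ⟶ f i, (r • 𝟙 (f i)) ≫ s = 𝟙 _ ∧ s ≫ (r • 𝟙 (f i)) = 𝟙 _ :=
      fun i => (show IsIso (r • 𝟙 (f i)) from h i).out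
    choose s hs1 hs2 using h'
    obtain ⟨t, ht⟩ := hC.exists_desc (fun i => s i ≫ c.inj i)
    have key : r • t = 𝟙 _ := hC.hom_ext (fun i => by
      have := hs1 i
      rw [Linear.smul_comp, Category.id_comp] at this
      rw [Linear.comp_smul, ht, ← Linear.smul_comp, this, Category.id_comp, Category.comp_id])
    exact ⟨t, by rw [Linear.smul_comp, Category.id_comp, key],
      by rw [Linear.comp_smul, Category.comp_id, key]⟩

/-- `x ∈ fLoc r` is orthogonal to anything killed by `r` -/
lemma fLoc_lOrth {r : R} {x c : T} (hx : x ∈ fLoc T r) (hc : r • 𝟙 c = 0) : c ∈ lOrth x := by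
  intro n g
  have h : IsIso (r • 𝟙 (x⟦n⟧)) := (isLoc_fLoc.{0} r).shift_mem n hx
  rw [← cancel_mono (r • 𝟙 (x⟦n⟧)), zero_comp, Linear.comp_smul, Category.comp_id]
  have : r • g = (r • 𝟙 c) ≫ g := by simp
  rw [this, hc, zero_comp]

/-- if `r : c ⟶ c` has cone orthogonal to `x` then `c` is orthogonal to the cone of `r` on `x` -/
lemma lOrth_cone {r : R} {x c z : T} {g : x ⟶ z} {h : z ⟶ x⟦(1 : ℤ)⟧}
    (hT : Triangle.mk (r • 𝟙 x) g h ∈ (distinguishedTriangles : Set (Triangle T)))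
    (hc : ConeIn (lOrth x) (r • 𝟙 c)) : c ∈ lOrth z := by
  have bij : ∀ n, Function.Bijective (fun u : c ⟶ x⟦n⟧ => r • u) := fun n => by
    have := lOrth_bij hc n
    simpa using this
  suffices H : ∀ {c : T}, (∀ n, Function.Bijective (fun u : c ⟶ x⟦n⟧ => r • u)) →
      ∀ u : c ⟶ z, u = 0 by
    intro n u
    apply (shiftFunctor T (-n)).map_injective
    rw [Functor.map_zero, ← cancel_mono ((shiftShiftNeg z n).hom), zero_comp]
    refine H (fun m => ?_) _
    -- c⟦-n⟧ ⟶ x⟦m⟧ versus c ⟶ x⟦m + n⟧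
    constructor
    · intro a b hab
      apply (shiftFunctor T n).map_injective
      rw [← cancel_epi ((shiftNegShift c n).inv),
        ← cancel_mono ((shiftFunctorAdd T m n).inv.app x)]
      apply (bij (m + n)).1
      have h2 : r • a⟦n⟧' = r • b⟦n⟧' := by
        rw [← Functor.map_smul, ← Functor.map_smul]
        exact congrArg _ hab
      have e1 : ∀ v : (shiftFunctor T n).obj ((shiftFunctor T (-n)).obj c) ⟶ (x⟦m⟧)⟦n⟧,
        r • (((shiftNegShift c n).inv ≫ v) ≫ (shiftFunctorAdd T m n).inv.app x) =
          ((shiftNegShift c n).inv ≫ (r • v)) ≫ (shiftFunctorAdd T m n).inv.app x := by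
        intro v; rw [Linear.comp_smul, Linear.smul_comp]
      refine (e1 _).trans (Eq.trans ?_ (e1 _).symm)
      rw [h2]
    · intro a
      obtain ⟨b, hb⟩ := (bij (m + n)).2
        ((shiftNegShift c n).inv ≫ a⟦n⟧' ≫ (shiftFunctorAdd T m n).inv.app x)
      obtain ⟨a', ha'⟩ := (shiftFunctor T n).map_surjective
        ((shiftNegShift c n).hom ≫ b ≫ (shiftFunctorAdd T m n).hom.app x)
      refine ⟨a', ?_⟩
      apply (shiftFunctor T n).map_injective
      have h3 : (r • a')⟦n⟧' = r • a'⟦n⟧' := Functor.map_smul ..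
      refine h3.trans ?_
      rw [ha', ← Linear.comp_smul, ← Linear.smul_comp]
      have hb' : r • b = _ := hb
      rw [hb']
      have gen : ∀ {p q s t : T} (i : p ≅ q) (j : t ≅ s) (a : p ⟶ s),
          i.hom ≫ (i.inv ≫ a ≫ j.inv) ≫ j.hom = a := by intros; simp
      exact gen (shiftNegShift c n) ((shiftFunctorAdd T m n).app x) _
  intro c bij u
  have b1 : Function.Bijective (fun u : c ⟶ x => r • u) := by
    have := bij 0
    constructor
    · intro a b hab
      rw [← cancel_mono ((shiftFunctorZero T ℤ).inv.app x)]
      apply this.1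
      have hab' : r • a = r • b := hab
      have e1 : ∀ v : c ⟶ x, r • (v ≫ (shiftFunctorZero T ℤ).inv.app x) =
          (r • v) ≫ (shiftFunctorZero T ℤ).inv.app x := fun v => (Linear.smul_comp ..).symm
      refine (e1 _).trans (Eq.trans ?_ (e1 _).symm)
      rw [hab']
    · intro a
      obtain ⟨b, hb⟩ := this.2 (a ≫ (shiftFunctorZero T ℤ).inv.app x)
      have hb' : r • b = _ := hb
      refine ⟨b ≫ (shiftFunctorZero T ℤ).hom.app x, ?_⟩
      have e2 : r • (b ≫ (shiftFunctorZero T ℤ).hom.app x) =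
          (r • b) ≫ (shiftFunctorZero T ℤ).hom.app x := (Linear.smul_comp ..).symm
      refine e2.trans ?_
      rw [hb', Category.assoc, Iso.inv_hom_id_app]
      exact Category.comp_id _
  have hu : u ≫ h = 0 := by
    apply (bij 1).1
    have z31 : h ≫ (r • 𝟙 x)⟦(1 : ℤ)⟧' = 0 := comp_distTriang_mor_zero₃₁ _ hT
    rw [Functor.map_smul, CategoryTheory.Functor.map_id, Linear.comp_smul, Category.comp_id] at z31
    have e3 : r • (u ≫ h) = u ≫ (r • h) := (Linear.comp_smul ..).symm
    refine e3.trans ?_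
    rw [z31, comp_zero]
    exact (smul_zero r).symm
  obtain ⟨v, hv⟩ : ∃ v : c ⟶ x, u = v ≫ g := Triangle.coyoneda_exact₃ _ hT u hu
  obtain ⟨v', hv'⟩ := b1.2 v
  have hv'' : r • v' = v := hv'
  have z12 : (r • 𝟙 x) ≫ g = 0 := comp_distTriang_mor_zero₁₂ _ hT
  rw [Linear.smul_comp, Category.id_comp] at z12
  rw [hv, ← hv'', Linear.smul_comp, ← Linear.comp_smul, z12, comp_zero]

end Abs2

end LocAux

namespace LocAux

section DR

variable {R : Type u} [CommRing R] [HasDerivedCategory.{w'} (ModuleCat.{u} R)]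

open DerivedCategory

lemma smod_smul (f : R) (M : ModuleCat.{u} R) :
    f • 𝟙 (smod R M) = (singleFunctor (ModuleCat.{u} R) 0).map (f • 𝟙 M) := by
  rw [Functor.map_smul, CategoryTheory.Functor.map_id]
  rfl

lemma smod_away_mem (f : R) : smod R (ModuleCat.of R (Localization.Away f)) ∈
    fLoc (DerivedCategory (ModuleCat.{u} R)) f := by
  change IsIso _
  rw [smod_smul]
  have : IsIso (f • 𝟙 (ModuleCat.of R (Localization.Away f))) := by
    rw [ConcreteCategory.isIso_iff_bijective]
    have h : Function.Bijective (fun y : Localization.Away f => f • y) := by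
      have := IsLocalization.Away.algebraMap_isUnit (S := Localization.Away f) f
      simp only [Algebra.smul_def]
      exact IsUnit.isUnit_iff_mulLeft_bijective.1 this
    exact h
  exact Functor.map_isIso (singleFunctor (ModuleCat.{u} R) 0) _

lemma smod_quot_smul (f : R) : f • 𝟙 (smod R (ModuleCat.of R (R ⧸ Ideal.span {f}))) = 0 := by
  rw [smod_smul]
  have : f • 𝟙 (ModuleCat.of R (R ⧸ Ideal.span {f})) = 0 := by
    ext
    change f • (1 : R ⧸ Ideal.span {f}) = 0
    rw [Algebra.smul_def, mul_one]
    exact Ideal.Quotient.eq_zero_iff_mem.2 (Ideal.mem_span_singleton_self f)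
  rw [this, Functor.map_zero]
  rfl

lemma killed_mem {L : Set (DerivedCategory (ModuleCat.{u} R))} (hL : IsLocalizingSub.{u} L)
    {f : R} (hf : smod R (ModuleCat.of R (R ⧸ Ideal.span {f})) ∈ L)
    (N : ModuleCat.{u} R) (hN : f • 𝟙 N = 0) : smod R N ∈ L := by
  have hN' : ∀ y : N, f • y = 0 := fun y => by
    have := congrArg (fun φ => φ.hom y) hN
    exact this
  have ht : Module.IsTorsionBySet R N (Ideal.span {f} : Ideal R) := by
    rw [Module.isTorsionBySet_span_singleton_iff]
    exact fun {y} => hN' y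
  let _ : Module (R ⧸ Ideal.span {f}) N := ht.module
  have h1 := res_mem hL (R ⧸ Ideal.span {f}) hf
    ((HomologicalComplex.single (ModuleCat.{u} (R ⧸ Ideal.span {f})) (ComplexShape.up ℤ) 0).obj
      (ModuleCat.of _ N))
  let F := ModuleCat.restrictScalars.{u} (algebraMap R (R ⧸ Ideal.span {f}))
  let e1 := (HomologicalComplex.singleMapHomologicalComplex F (ComplexShape.up ℤ) 0).app
    (ModuleCat.of _ N)
  let e2 : F.obj (ModuleCat.of (R ⧸ Ideal.span {f}) N) ≅ N :=
    (show (F.obj (ModuleCat.of (R ⧸ Ideal.span {f}) N) : ModuleCat.{u} R) ≃ₗ[R] N from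
    { AddEquiv.refl N with
      map_smul' := fun r x => rfl }).toModuleIso
  exact hL.mem_of_iso (Q.mapIso e1 ≪≫ (singleFunctor (ModuleCat.{u} R) 0).mapIso e2) h1

lemma coneIn_smul {L : Set (DerivedCategory (ModuleCat.{u} R))} (hL : IsLocalizingSub.{u} L)
    {f : R} (hf : smod R (ModuleCat.of R (R ⧸ Ideal.span {f})) ∈ L)
    (N : ModuleCat.{u} R) : ConeIn L (f • 𝟙 (smod R N)) := by
  obtain ⟨I, p, i, hp, hi, hpi⟩ : ∃ (I : ModuleCat.{u} R) (p : N ⟶ I) (i : I ⟶ N),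
      Epi p ∧ Mono i ∧ p ≫ i = f • 𝟙 N :=
    ⟨_, factorThruImage (f • 𝟙 N), image.ι (f • 𝟙 N), inferInstance, inferInstance, image.fac _⟩
  have h1 : (ShortComplex.mk (kernel.ι p) p (kernel.condition p)).ShortExact :=
    { exact := ShortComplex.exact_kernel p
      mono_f := inferInstanceAs (Mono (kernel.ι p))
      epi_g := hp }
  have h2 : (ShortComplex.mk i (cokernel.π i) (cokernel.condition i)).ShortExact :=
    { exact := ShortComplex.exact_cokernel i
      mono_f := hi
      epi_g := inferInstanceAs (Epi (cokernel.π i)) }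
  have k1 : smod R (kernel p) ∈ L := killed_mem hL hf _ (by
    rw [← cancel_mono (kernel.ι p), Linear.smul_comp, Category.id_comp, zero_comp]
    have : f • kernel.ι p = kernel.ι p ≫ (f • 𝟙 N) := by simp
    rw [this, ← hpi, kernel.condition_assoc, zero_comp])
  have k2 : smod R (cokernel i) ∈ L := killed_mem hL hf _ (by
    rw [← cancel_epi (cokernel.π i), Linear.comp_smul, Category.comp_id, comp_zero]
    have : f • cokernel.π i = (f • 𝟙 N) ≫ cokernel.π i := by simp
    rw [this, ← hpi, Category.assoc, cokernel.condition, comp_zero])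
  have c1 : ConeIn L ((singleFunctor (ModuleCat.{u} R) 0).map p) :=
    ⟨_, _, _, rot_of_distTriang _ h1.singleTriangle_distinguished, hL.shift_mem 1 k1⟩
  have c2 : ConeIn L ((singleFunctor (ModuleCat.{u} R) 0).map i) :=
    ⟨_, _, _, h2.singleTriangle_distinguished, k2⟩
  have := coneIn_comp hL c1 c2
  rw [← Functor.map_comp, hpi, ← smod_smul] at this
  exact this

lemma mem_fLoc {x : DerivedCategory (ModuleCat.{u} R)} {f : R}
    (hf : smod R (ModuleCat.of R (R ⧸ Ideal.span {f})) ∈ lOrth x) :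
    x ∈ fLoc (DerivedCategory (ModuleCat.{u} R)) f := by
  obtain ⟨z, g, h, hT⟩ := distinguished_cocone_triangle (f • 𝟙 x)
  have h1 : smod R (ModuleCat.of R R) ∈ lOrth z :=
    lOrth_cone hT (coneIn_smul (isLoc_lOrth x) hf _)
  have h2 : IsZero z := lOrth_self (gen_mem (isLoc_lOrth z) h1 z)
  exact (Triangle.isZero₃_iff_isIso₁ _ hT).1 h2

omit [HasDerivedCategory.{w'} (ModuleCat.{u} R)] in
lemma tensor_bij {f : R} (M : Type u) [AddCommGroup M] [Module R M]
    (hb : Function.Bijective (fun y : M => f • y)) (A : Type u) [CommRing A] [Algebra R A]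
    [IsLocalization (Submonoid.powers f) A] :
    Function.Bijective (TensorProduct.mk R A M 1) := by
  have hp : ∀ s : Submonoid.powers f, Function.Bijective (fun y : M => s • y) := by
    rintro ⟨_, n, rfl⟩
    have : (fun y : M => (⟨f ^ n, n, rfl⟩ : Submonoid.powers f) • y) = (fun y : M => f • y)^[n] := by
      funext y
      change f ^ n • y = _
      induction n with
      | zero => simp
      | succ n ih => rw [Function.iterate_succ_apply', ← ih, pow_succ', mul_smul]
    exact this ▸ hb.iterate n
  have hl : IsLocalizedModule (Submonoid.powers f) (TensorProduct.mk R A M 1) :=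
    (isLocalizedModule_iff_isBaseChange (Submonoid.powers f) A _).2
      (TensorProduct.isBaseChange R M A)
  constructor
  · rw [injective_iff_map_eq_zero]
    intro y hy
    obtain ⟨s, hs⟩ := (IsLocalizedModule.eq_zero_iff (Submonoid.powers f) _).1 hy
    exact (hp s).1 (hs.trans (smul_zero s).symm)
  · intro y
    obtain ⟨⟨m, s⟩, hs⟩ := IsLocalizedModule.surj (Submonoid.powers f)
      (TensorProduct.mk R A M 1) y
    obtain ⟨m', hm'⟩ := (hp s).2 m
    refine ⟨m', IsLocalizedModule.smul_injective (TensorProduct.mk R A M 1) s ?_⟩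
    have hm'' : s • m' = m := hm'
    have hs' : s • y = TensorProduct.mk R A M 1 m := hs
    change s • _ = s • y
    rw [hs', ← hm'']
    exact (LinearMap.map_smul (TensorProduct.mk R A M 1) (s : R) m').symm

omit [HasDerivedCategory.{w'} (ModuleCat.{u} R)] in
lemma unit_isIso {f : R} (M : ModuleCat.{u} R) (hM : IsIso (f • 𝟙 M)) :
    IsIso ((ModuleCat.extendRestrictScalarsAdj
      (algebraMap R (Localization.Away f))).unit.app M) := by
  rw [ConcreteCategory.isIso_iff_bijective]
  have hb : Function.Bijective (fun y : M => f • y) := by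
    rw [ConcreteCategory.isIso_iff_bijective] at hM
    exact hM
  have h0 : @IsLocalization R _ (Submonoid.powers f) (Localization.Away f) _
      (algebraMap R (Localization.Away f)).toAlgebra := by
    have h : (algebraMap R (Localization.Away f)).toAlgebra =
      (inferInstance : Algebra R (Localization.Away f)) := Algebra.algebra_ext _ _ (fun _ => rfl)
    rw [h]
    exact (inferInstance : IsLocalization (Submonoid.powers f) (Localization.Away f))
  exact @tensor_bij R _ f M _ _ hb (Localization.Away f) _
    (algebraMap R (Localization.Away f)).toAlgebra h0

lemma isIso_homology {f : R} (K : CochainComplex (ModuleCat.{u} R) ℤ)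
    (hK : Q.obj K ∈ fLoc (DerivedCategory (ModuleCat.{u} R)) f) (n : ℤ) :
    IsIso (f • 𝟙 (K.homology n)) := by
  have h1 : IsIso (Q.map (f • 𝟙 K)) := by
    rw [Functor.map_smul, CategoryTheory.Functor.map_id]
    exact hK
  rw [isIso_Q_map_iff_quasiIso (C := ModuleCat.{u} R)] at h1
  have h2 : IsIso (HomologicalComplex.homologyMap (f • 𝟙 K) n) := inferInstance
  have h3 : HomologicalComplex.homologyMap (f • 𝟙 K) n = f • 𝟙 (K.homology n) :=
    (ShortComplex.homologyMap_smul (𝟙 (K.sc n)) f).trans (by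
      rw [ShortComplex.homologyMap_id]; rfl)
  rw [← h3]
  exact h2

lemma fLoc_essImage {f : R} (K : CochainComplex (ModuleCat.{u} R) ℤ)
    (hK : Q.obj K ∈ fLoc (DerivedCategory (ModuleCat.{u} R)) f) :
    ∃ K' : CochainComplex (ModuleCat.{u} (Localization.Away f)) ℤ,
        Nonempty (Q.obj K ≅ Q.obj
          (((ModuleCat.restrictScalars.{u}
              (algebraMap R (Localization.Away f))).mapHomologicalComplex
                (ComplexShape.up ℤ)).obj K')) := by
  let E := ModuleCat.extendScalars.{u, u, u} (algebraMap R (Localization.Away f))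
  let F := ModuleCat.restrictScalars.{u} (algebraMap R (Localization.Away f))
  have hfl : (algebraMap R (Localization.Away f)).Flat := by
    rw [RingHom.flat_algebraMap_iff]
    exact IsLocalization.flat _ (Submonoid.powers f)
  have : PreservesFiniteLimits E := ModuleCat.preservesFiniteLimits_extendScalars_of_flat hfl
  have : E.IsLeftAdjoint := (ModuleCat.extendRestrictScalarsAdj
    (algebraMap R (Localization.Away f))).isLeftAdjoint
  have : PreservesFiniteColimits E := PreservesColimits.preservesFiniteColimits E
  have : E.Additive := Functor.additive_of_preserves_binary_products E
  have : (E ⋙ F).PreservesHomology := inferInstance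
  let η : 𝟭 (ModuleCat.{u} R) ⟶ E ⋙ F :=
    (ModuleCat.extendRestrictScalarsAdj (algebraMap R (Localization.Away f))).unit
  let t : K ⟶ (F.mapHomologicalComplex (ComplexShape.up ℤ)).obj
      ((E.mapHomologicalComplex (ComplexShape.up ℤ)).obj K) :=
    (NatTrans.mapHomologicalComplex η (ComplexShape.up ℤ)).app K
  have ht : QuasiIso t := ⟨fun n => by
    rw [quasiIsoAt_iff_isIso_homologyMap]
    have h1 := ShortComplex.homologyMap_mapNatTrans (K.sc n) η
    have h2 : IsIso (η.app (K.sc n).homology) := unit_isIso _ (isIso_homology K hK n)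
    have h3 : IsIso (ShortComplex.homologyMap ((K.sc n).mapNatTrans η)) := by
      rw [h1]; infer_instance
    exact h3⟩
  have ht' : IsIso (Q.map t) := (isIso_Q_map_iff_quasiIso (C := ModuleCat.{u} R) t).2 ht
  exact ⟨(E.mapHomologicalComplex (ComplexShape.up ℤ)).obj K, ⟨asIso (Q.map t)⟩⟩

theorem main (R : Type u) [CommRing R]
    [HasDerivedCategory.{w'} (ModuleCat.{u} R)] (f : R) :
    rightOrth (Loc.{u} {smod R (ModuleCat.of R (R ⧸ Ideal.span {f}))}) =
      Loc.{u} {smod R (ModuleCat.of R (Localization.Away f))} ∧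
    (∀ x : DerivedCategory (ModuleCat.{u} R),
      x ∈ Loc.{u} {smod R (ModuleCat.of R (Localization.Away f))} ↔
      ∃ K : CochainComplex (ModuleCat.{u} (Localization.Away f)) ℤ,
        Nonempty (x ≅ DerivedCategory.Q.obj
          (((ModuleCat.restrictScalars.{u}
              (algebraMap R (Localization.Away f))).mapHomologicalComplex
                (ComplexShape.up ℤ)).obj K))) := by
  have h1 : ∀ x, x ∈ Loc.{u} {smod R (ModuleCat.of R (Localization.Away f))} →
      x ∈ fLoc (DerivedCategory (ModuleCat.{u} R)) f := fun x hx =>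
    Loc_le (isLoc_fLoc f) (by rintro _ rfl; exact smod_away_mem f) hx
  have h2 : ∀ x : DerivedCategory (ModuleCat.{u} R),
      x ∈ fLoc (DerivedCategory (ModuleCat.{u} R)) f →
      ∃ K : CochainComplex (ModuleCat.{u} (Localization.Away f)) ℤ,
        Nonempty (x ≅ DerivedCategory.Q.obj
          (((ModuleCat.restrictScalars.{u}
              (algebraMap R (Localization.Away f))).mapHomologicalComplex
                (ComplexShape.up ℤ)).obj K)) := by
    intro x hx
    obtain ⟨K', ⟨e⟩⟩ := fLoc_essImage (Q.objPreimage x)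
      ((isLoc_fLoc.{u} f).mem_of_iso (Q.objObjPreimageIso x).symm hx)
    exact ⟨K', ⟨(Q.objObjPreimageIso x).symm ≪≫ e⟩⟩
  have h3 : ∀ x : DerivedCategory (ModuleCat.{u} R),
      (∃ K : CochainComplex (ModuleCat.{u} (Localization.Away f)) ℤ,
        Nonempty (x ≅ DerivedCategory.Q.obj
          (((ModuleCat.restrictScalars.{u}
              (algebraMap R (Localization.Away f))).mapHomologicalComplex
                (ComplexShape.up ℤ)).obj K))) →
      x ∈ Loc.{u} {smod R (ModuleCat.of R (Localization.Away f))} := by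
    rintro x ⟨K, ⟨e⟩⟩
    have hL := isLoc_Loc.{u} {smod R (ModuleCat.of R (Localization.Away f))}
    exact hL.mem_of_iso e.symm (res_mem hL (Localization.Away f) (subset_Loc _ rfl) K)
  refine ⟨?_, fun x => ⟨fun hx => h2 x (h1 x hx), h3 x⟩⟩
  ext x
  constructor
  · intro hx
    refine h3 x (h2 x (mem_fLoc ?_))
    intro n g
    have hs := (isLoc_Loc.{u} {smod R (ModuleCat.of R (R ⧸ Ideal.span {f}))}).shift_mem (-n)
      (subset_Loc _ rfl)
    apply (shiftFunctor _ (-n)).map_injective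
    rw [Functor.map_zero, ← cancel_mono ((shiftShiftNeg x n).hom), zero_comp]
    exact hx hs _
  · intro hx c hc g
    have h4 : c ∈ lOrth x := Loc_le (isLoc_lOrth x) (by
      rintro _ rfl
      exact fLoc_lOrth (h1 x hx) (smod_quot_smul f)) hc
    rw [← cancel_mono ((shiftFunctorZero _ ℤ).inv.app x), zero_comp]
    exact h4 0 _

end DR

end LocAux

/-- Theorem: for `f ∈ R`, one has `Loc(R/(f))^⊥ = Loc(R_f)` in `D(R)`; moreover
`Loc(R_f)` is the essential image of the functor `D(R_f) → D(R)` induced by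
restriction of scalars along `R → R_f` (an object lies in `Loc(R_f)` iff it is
isomorphic to the image of a complex of `R_f`-modules under restriction of
scalars). -/
theorem rightOrth_loc_quotient_single_eq_loc_localization (R : Type u) [CommRing R]
    [HasDerivedCategory.{w'} (ModuleCat.{u} R)] (f : R) :
    rightOrth (Loc.{u} {smod R (ModuleCat.of R (R ⧸ Ideal.span {f}))}) =
      Loc.{u} {smod R (ModuleCat.of R (Localization.Away f))} ∧
    (∀ x : DerivedCategory (ModuleCat.{u} R),
      x ∈ Loc.{u} {smod R (ModuleCat.of R (Localization.Away f))} ↔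
      ∃ K : CochainComplex (ModuleCat.{u} (Localization.Away f)) ℤ,
        Nonempty (x ≅ DerivedCategory.Q.obj
          (((ModuleCat.restrictScalars.{u}
              (algebraMap R (Localization.Away f))).mapHomologicalComplex
                (ComplexShape.up ℤ)).obj K))) := by
  exact LocAux.main R f
end
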